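/- arXiv:2401.00531 — 2 statements merged into one kernel-verified Lean document; each statement's English description precedes it below -/
import Mathlib

section
/- Let p be a prime, let G be a group that is pseudo finite at p, and let C be a nonempty collection of nontrivial finite p-subgroups of G that is closed under G-conjugation and under passage to overgroups in G that are finite p-groups. Then the quotient of the geometric realization of the order complex of the poset C (ordered by inclusion) by the conjugation action of G is a contractible topological space. -/
open scoped Pointwise

/-- The conjugate subgroup `g⁻¹ P g`. -/
def conjSub {G : Type*} [Group G] (g : G) (P : Subgroup G) : Subgroup G :=
  P.map (MulAut.conj g⁻¹).toMonoidHom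

/-- `S` is a Sylow `p`-subgroup of the (possibly infinite) group `G`:
a finite `p`-subgroup such that every finite `p`-subgroup of `G` is conjugate
in `G` to a subgroup of `S`. -/
def IsSylow (p : ℕ) {G : Type*} [Group G] (S : Subgroup G) : Prop :=
  Finite S ∧ IsPGroup p S ∧
    ∀ Q : Subgroup G, Finite Q → IsPGroup p Q → ∃ g : G, conjSub g Q ≤ S

/-- `S` is a Sylow `p`-subgroup of the subgroup `N` of `G`:
`S` is a finite `p`-subgroup contained in `N` such that every finite `p`-subgroup
of `G` contained in `N` is conjugate by an element of `N` to a subgroup of `S`. -/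
def IsSylowIn (p : ℕ) {G : Type*} [Group G] (N S : Subgroup G) : Prop :=
  S ≤ N ∧ Finite S ∧ IsPGroup p S ∧
    ∀ Q : Subgroup G, Q ≤ N → Finite Q → IsPGroup p Q → ∃ g ∈ N, conjSub g Q ≤ S

/-- The normalizer of a chain of subgroups: the intersection of the normalizers
of the members of the chain. -/
def chainNorm {G : Type*} [Group G] {n : ℕ} (γ : Fin (n + 1) → Subgroup G) : Subgroup G :=
  ⨅ i, Subgroup.normalizer (γ i : Set G)

/-- `G` is pseudo finite at `p` if for every chain of finite `p`-subgroups of `G`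
(the trivial subgroup allowed in the chain), the normalizer of the chain has a
Sylow `p`-subgroup. -/
def PseudoFiniteAt (p : ℕ) (G : Type*) [Group G] : Prop :=
  ∀ (n : ℕ) (γ : Fin (n + 1) → Subgroup G), Monotone γ →
    (∀ i, Finite (γ i)) → (∀ i, IsPGroup p (γ i)) →
      ∃ S : Subgroup G, IsSylowIn p (chainNorm γ) S

/-- The member of the chain preceding position `i`, with the convention that the
member preceding position `0` is the trivial subgroup. -/
def chainPrev {G : Type*} [Group G] {n : ℕ} (γ : Fin (n + 1) → Subgroup G)
    (i : Fin (n + 1)) : Subgroup G :=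
  match i with
  | ⟨0, _⟩ => ⊥
  | ⟨j + 1, h⟩ => γ ⟨j, by omega⟩

/-- A strictly increasing chain `γ = (P_0 < ⋯ < P_n)` of nontrivial finite
`p`-subgroups is redundant if for every Sylow `p`-subgroup `Q` of `N_G(γ)` and
every `0 ≤ i ≤ n`, `P_i ≠ Q·P_{i-1}` (with `P_{-1} = 1`). -/
def IsRedundant (p : ℕ) {G : Type*} [Group G] {n : ℕ} (γ : Fin (n + 1) → Subgroup G) : Prop :=
  ∀ Q : Subgroup G, IsSylowIn p (chainNorm γ) Q →
    ∀ i : Fin (n + 1), (γ i : Set G) ≠ (Q : Set G) * (chainPrev γ i : Set G)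

/-- The chain obtained from `γ` by inserting the subgroup `H` immediately after
position `i`. -/
def insertChain {G : Type*} [Group G] {n : ℕ} (γ : Fin (n + 1) → Subgroup G)
    (i : Fin (n + 1)) (H : Subgroup G) : Fin (n + 2) → Subgroup G :=
  fun j =>
    if h : (j : ℕ) ≤ (i : ℕ) then γ ⟨j, by have := i.isLt; omega⟩
    else if h2 : (j : ℕ) = (i : ℕ) + 1 then H
    else γ ⟨(j : ℕ) - 1, by have := j.isLt; omega⟩

/-- The chain obtained from `σ` by deleting the member at position `i`. -/
def deleteChain {G : Type*} [Group G] {n : ℕ} (σ : Fin (n + 2) → Subgroup G)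
    (i : Fin (n + 2)) : Fin (n + 1) → Subgroup G :=
  fun j =>
    if h : (j : ℕ) < (i : ℕ) then σ ⟨j, by have := j.isLt; omega⟩
    else σ ⟨(j : ℕ) + 1, by have := j.isLt; omega⟩

open CategoryTheory

/-- The conjugation action of `g ∈ G` on a collection `C` of subgroups of `G`
that is closed under conjugation: `P ↦ g⁻¹Pg`. -/
def conjFun {G : Type} [Group G] (C : Set (Subgroup G))
    (hconj : ∀ P ∈ C, ∀ g : G, conjSub g P ∈ C) (g : G) : C → C :=
  fun P => ⟨conjSub g P.1, hconj P.1 P.2 g⟩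

/-- Conjugation is inclusion preserving, hence a map of posets. -/
lemma conjFun_monotone {G : Type} [Group G] (C : Set (Subgroup G))
    (hconj : ∀ P ∈ C, ∀ g : G, conjSub g P ∈ C) (g : G) :
    Monotone (conjFun C hconj g) := by
  intro P Q h
  exact Subgroup.map_mono h

/-!
The realization functor is a left adjoint, so the orbit space is the realization of the simplicial
set `Z` whose simplices are the conjugacy classes of chains in `C`. It is enough that the inclusion
into `Z` of the vertex given by a Sylow `p`-subgroup of `G` is anodyne.

For a chain `P₀ < ⋯ < Pₙ` in `C` let `Q` be a Sylow `p`-subgroup of its normalizer, which contains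
`P₀`, and let `Pᵢ` be the last term that does not contain `Q`. Either `Pᵢ₊₁ = Q Pᵢ`, or inserting
`Q Pᵢ` after `Pᵢ` gives a chain with the same Sylow subgroup `Q`, as normalizers grow in finite
`p`-groups. Matching each chain of the first kind with the face that omits `Pᵢ₊₁` pairs all
nondegenerate simplices of `Z` except those chains all of whose terms contain `Q`; such a chain is
the single subgroup `Q`, which is then Sylow in `G`. An attaching order is found by decreasing
`|Q|`, then by increasing `i`.

Finally, an anodyne inclusion `{v} ⟶ Z` lifts the unit `Z ⟶ Sing |Z|` to the singular complex of the
space of paths in `|Z|` that end at `v`; the adjoint of the lift contracts `|Z|`.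
-/

open scoped unitInterval Simplicial

/-! ### Lifting through the path fibration -/

/-- The space of paths in `Y` that end at `y₀`, the total space of the path fibration over `Y`. -/
abbrev PathsTo (Y : Type*) [TopologicalSpace Y] (y₀ : Y) : Type _ := {γ : C(I, Y) // γ 1 = y₀}

/-- A deformation of the space `D` into a subset `A`, in which the point `x` has reached `A` at the
time `arrival x < 1`; points of `A` arrive at time `0`. -/
structure DeformationInto {D : Type*} [TopologicalSpace D] (A : Set D) where
  flow : C(D × I, D)
  arrival : C(D, I)
  flow_zero (x : D) : flow (x, 0) = x
  arrival_lt_one (x : D) : arrival x < 1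
  arrival_eq_zero {x : D} (hx : x ∈ A) : arrival x = 0
  flow_arrival_mem (x : D) : flow (x, arrival x) ∈ A

namespace DeformationInto

variable {D Y : Type*} [TopologicalSpace D] [TopologicalSpace Y] {A : Set D} {y₀ : Y}
  (d : DeformationInto A)

/-- The end map `D → A` of a deformation. -/
def retract : C(D, A) where
  toFun x := ⟨d.flow (x, d.arrival x), d.flow_arrival_mem x⟩
  continuous_toFun := by fun_prop

lemma retract_of_mem {x : D} (hx : x ∈ A) : d.retract x = ⟨x, hx⟩ :=
  Subtype.ext <| show d.flow (x, d.arrival x) = x by rw [d.arrival_eq_zero hx, d.flow_zero]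

/-- The affine reparametrization of the time interval `[arrival x, 1]` by `[0, 1]`. -/
noncomputable def timeAfterArrival (q : D × I) : I :=
  Set.projIcc 0 1 zero_le_one (((q.2 : ℝ) - d.arrival q.1) / (1 - d.arrival q.1))

lemma one_sub_arrival_pos (x : D) : 0 < 1 - (d.arrival x : ℝ) :=
  sub_pos.2 (d.arrival_lt_one x)

@[fun_prop]
lemma continuous_timeAfterArrival : Continuous d.timeAfterArrival :=
  continuous_projIcc.comp <| Continuous.div (by fun_prop) (by fun_prop)
    fun q => (d.one_sub_arrival_pos q.1).ne'

lemma timeAfterArrival_arrival (x : D) : d.timeAfterArrival (x, d.arrival x) = 0 := by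
  simp [timeAfterArrival]

lemma timeAfterArrival_one (x : D) : d.timeAfterArrival (x, 1) = 1 := by
  simp [timeAfterArrival, div_self (d.one_sub_arrival_pos x).ne']

lemma timeAfterArrival_of_mem {x : D} (hx : x ∈ A) (t : I) : d.timeAfterArrival (x, t) = t := by
  simp [timeAfterArrival, d.arrival_eq_zero hx]

/-- The path in `Y` that follows the image under `u` of the deformation of `x` until its arrival
in `A`, and then the path given by `ψ`. -/
noncomputable def followThen (u : D → Y) (ψ : A → PathsTo Y y₀) (q : D × I) : Y :=
  if q.2 ≤ d.arrival q.1 then u (d.flow q) else (ψ (d.retract q.1)).1 (d.timeAfterArrival q)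

variable {u : C(D, Y)} {ψ : C(A, PathsTo Y y₀)}

lemma continuous_followThen (hψ : ∀ a, (ψ a).1 0 = u a) : Continuous (d.followThen u ψ) := by
  refine Continuous.if_le (by fun_prop) (by fun_prop) (by fun_prop) (by fun_prop) ?_
  rintro ⟨x, t⟩ (rfl : t = d.arrival x)
  rw [timeAfterArrival_arrival, hψ]
  rfl

lemma followThen_zero (x : D) : d.followThen u ψ (x, 0) = u x := by
  rw [followThen, if_pos (show 0 ≤ d.arrival x from unitInterval.nonneg'), d.flow_zero]

lemma followThen_one (x : D) : d.followThen u ψ (x, 1) = y₀ := by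
  rw [followThen, if_neg (d.arrival_lt_one x).not_ge, timeAfterArrival_one]
  exact (ψ (d.retract x)).2

lemma followThen_of_mem (hψ : ∀ a, (ψ a).1 0 = u a) {x : D} (hx : x ∈ A) (t : I) :
    d.followThen u ψ (x, t) = (ψ ⟨x, hx⟩).1 t := by
  by_cases ht : t ≤ d.arrival x
  · obtain rfl : t = 0 := le_antisymm (d.arrival_eq_zero hx ▸ ht) (unitInterval.nonneg t)
    rw [followThen_zero, hψ]
  · rw [followThen, if_neg ht, timeAfterArrival_of_mem _ hx, retract_of_mem _ hx]

theorem exists_extension_lift (d : DeformationInto A) (hψ : ∀ a, (ψ a).1 0 = u a) :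
    ∃ w : C(D, PathsTo Y y₀), (∀ a : A, w a = ψ a) ∧ ∀ x, (w x).1 0 = u x := by
  let w : C(D, C(I, Y)) := ContinuousMap.curry ⟨_, d.continuous_followThen hψ⟩
  refine ⟨⟨fun x => ⟨w x, d.followThen_one x⟩, w.continuous.subtype_mk _⟩, fun a => ?_,
    d.followThen_zero⟩
  exact Subtype.ext <| ContinuousMap.ext fun t => d.followThen_of_mem hψ a.2 t

end DeformationInto

/-! ### Horns in the topological simplex -/

section MinCoordNe

variable {ι : Type*} [Fintype ι] [DecidableEq ι] [Nontrivial ι]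

/-- The horn of the topological simplex that omits the interior and the face opposite to the
vertex `i`. -/
def topHorn {ι : Type*} [Fintype ι] (i : ι) : Set (stdSimplex ℝ ι) :=
  {z | ∃ j ≠ i, z j = 0}

/-- The smallest barycentric coordinate other than the `i`-th one; it vanishes exactly on
`topHorn i`. -/
noncomputable def minCoordNe (i : ι) (x : stdSimplex ℝ ι) : ℝ :=
  (Finset.univ.erase i).inf' (Finset.univ_nontrivial.erase_nonempty) fun j => x j

lemma continuous_stdSimplex_apply {ι : Type*} [Fintype ι] (j : ι) :
    Continuous fun x : stdSimplex ℝ ι => x j :=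
  (continuous_apply j).comp continuous_subtype_val

@[fun_prop]
lemma continuous_minCoordNe (i : ι) : Continuous (minCoordNe i) :=
  Continuous.finset_inf'_apply _ fun j _ => continuous_stdSimplex_apply j

lemma minCoordNe_le {i j : ι} (h : j ≠ i) (x : stdSimplex ℝ ι) : minCoordNe i x ≤ x j :=
  Finset.inf'_le _ (by simpa using h)

lemma minCoordNe_nonneg (i : ι) (x : stdSimplex ℝ ι) : 0 ≤ minCoordNe i x :=
  Finset.le_inf' _ _ fun j _ => stdSimplex.zero_le x j

lemma minCoordNe_le_one (i : ι) (x : stdSimplex ℝ ι) : minCoordNe i x ≤ 1 :=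
  have ⟨_, hj⟩ := exists_ne i
  (minCoordNe_le hj x).trans (stdSimplex.le_one x _)

lemma exists_apply_eq_minCoordNe (i : ι) (x : stdSimplex ℝ ι) :
    ∃ j ≠ i, x j = minCoordNe i x := by
  obtain ⟨j, hj, h⟩ :=
    Finset.exists_mem_eq_inf' (Finset.univ_nontrivial.erase_nonempty (a := i)) fun j => x j
  exact ⟨j, by simpa using hj, h.symm⟩

lemma minCoordNe_of_mem_topHorn {i : ι} {x : stdSimplex ℝ ι} (hx : x ∈ topHorn i) :
    minCoordNe i x = 0 := by
  obtain ⟨j, hji, hj⟩ := hx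
  exact le_antisymm (hj ▸ minCoordNe_le hji x) (minCoordNe_nonneg i x)

/-- The point obtained from `x` by moving the amount `s` from every coordinate other than the
`i`-th one to the `i`-th coordinate. -/
noncomputable def moveToCoord (i : ι) (x : stdSimplex ℝ ι) (s : Set.Icc 0 (minCoordNe i x)) :
    stdSimplex ℝ ι :=
  ⟨fun j => x j + s * ((if j = i then (Fintype.card ι : ℝ) else 0) - 1), fun j => by
    obtain ⟨s, hs, hsx⟩ := s
    dsimp only
    split_ifs with hj
    · have hcard : (1 : ℝ) ≤ Fintype.card ι := by exact_mod_cast Fintype.card_pos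
      exact add_nonneg (stdSimplex.zero_le x j) (mul_nonneg hs (by linarith))
    · linarith [minCoordNe_le hj x], by
    rw [Finset.sum_add_distrib, stdSimplex.sum_eq_one, ← Finset.mul_sum]
    simp⟩

/-- The deformation of the simplex into a horn that moves weight to the `i`-th coordinate with
speed `2` until another coordinate vanishes. -/
noncomputable def deformationIntoTopHorn (i : ι) : DeformationInto (topHorn i) where
  flow :=
    { toFun q := moveToCoord i q.1 ⟨min (2 * q.2) (minCoordNe i q.1),
        le_min (mul_nonneg zero_le_two q.2.2.1) (minCoordNe_nonneg i q.1), min_le_right _ _⟩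
      continuous_toFun := Continuous.subtype_mk (continuous_pi fun j =>
        ((continuous_stdSimplex_apply j).comp continuous_fst).add (by fun_prop)) _ }
  arrival :=
    { toFun x := ⟨minCoordNe i x / 2, by linarith [minCoordNe_nonneg i x],
        by linarith [minCoordNe_le_one i x]⟩
      continuous_toFun := by fun_prop }
  flow_zero x := by
    ext j
    change x j + min (2 * 0) (minCoordNe i x) * _ = x j
    simp [minCoordNe_nonneg]
  arrival_lt_one x :=
    Subtype.coe_lt_coe.1 <| show minCoordNe i x / 2 < 1 by linarith [minCoordNe_le_one i x]
  arrival_eq_zero hx :=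
    Subtype.ext <| show minCoordNe i _ / 2 = 0 by rw [minCoordNe_of_mem_topHorn hx, zero_div]
  flow_arrival_mem x := by
    obtain ⟨j, hji, hj⟩ := exists_apply_eq_minCoordNe i x
    refine ⟨j, hji, ?_⟩
    change x j + min (2 * (minCoordNe i x / 2)) (minCoordNe i x) * _ = 0
    rw [mul_div_cancel₀ _ two_ne_zero, min_self, if_neg hji, hj]
    simp

end MinCoordNe

section Faces

variable {n : ℕ}

lemma stdSimplex_map_succAbove_apply_self (j : Fin (n + 2)) (x : stdSimplex ℝ (Fin (n + 1))) :
    stdSimplex.map j.succAbove x j = 0 := by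
  simp [stdSimplex.map_coe, FunOnFinite.linearMap_apply_apply]

lemma stdSimplex_map_succAbove_apply_succAbove (j : Fin (n + 2)) (x : stdSimplex ℝ (Fin (n + 1)))
    (k : Fin (n + 1)) : stdSimplex.map j.succAbove x (j.succAbove k) = x k := by
  simp [stdSimplex.map_coe, FunOnFinite.linearMap_apply_apply, Finset.sum_filter]

lemma stdSimplex_map_succAbove_injective (j : Fin (n + 2)) :
    Function.Injective (stdSimplex.map (S := ℝ) j.succAbove) := fun x y h => by
  ext k
  rw [← stdSimplex_map_succAbove_apply_succAbove j x, h, stdSimplex_map_succAbove_apply_succAbove]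

lemma exists_stdSimplex_map_succAbove_eq {j : Fin (n + 2)} {z : stdSimplex ℝ (Fin (n + 2))}
    (hz : z j = 0) : ∃ x, stdSimplex.map j.succAbove x = z := by
  have hsum : ∑ k, z (j.succAbove k) = 1 := by
    rw [← stdSimplex.sum_eq_one z, Fin.sum_univ_succAbove _ j, hz, zero_add]
  refine ⟨⟨fun k => z (j.succAbove k), fun k => stdSimplex.zero_le z _, hsum⟩, ?_⟩
  ext k
  rcases Fin.eq_self_or_eq_succAbove j k with rfl | ⟨k, rfl⟩
  · rw [stdSimplex_map_succAbove_apply_self, hz]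
  · rw [stdSimplex_map_succAbove_apply_succAbove]
    rfl

lemma stdSimplex_map_succAbove_mem_topHorn {i j : Fin (n + 2)} (hj : j ≠ i)
    (x : stdSimplex ℝ (Fin (n + 1))) : stdSimplex.map j.succAbove x ∈ topHorn i :=
  ⟨j, hj, stdSimplex_map_succAbove_apply_self j x⟩

/-- The map from the disjoint union of the faces of a horn onto the horn. -/
noncomputable def topHornCover (i : Fin (n + 2)) :
    C((_ : {j // j ≠ i}) × stdSimplex ℝ (Fin (n + 1)), topHorn i) where
  toFun t := ⟨stdSimplex.map t.1.1.succAbove t.2, stdSimplex_map_succAbove_mem_topHorn t.1.2 t.2⟩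
  continuous_toFun :=
    continuous_sigma fun j => (stdSimplex.continuous_map j.1.succAbove).subtype_mk _

lemma topHornCover_surjective (i : Fin (n + 2)) : Function.Surjective (topHornCover i) := by
  rintro ⟨z, j, hj, hz⟩
  obtain ⟨x, hx⟩ := exists_stdSimplex_map_succAbove_eq hz
  exact ⟨⟨⟨j, hj⟩, x⟩, Subtype.ext hx⟩

lemma isQuotientMap_topHornCover (i : Fin (n + 2)) : Topology.IsQuotientMap (topHornCover i) :=
  .of_surjective_continuous (topHornCover_surjective i) (topHornCover i).continuous

lemma exists_continuousMap_topHorn {i : Fin (n + 2)} {E : Type*} [TopologicalSpace E]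
    (e : ∀ j, j ≠ i → C(stdSimplex ℝ (Fin (n + 1)), E))
    (he : ∀ j k hj hk x y, stdSimplex.map j.succAbove x = stdSimplex.map k.succAbove y →
      e j hj x = e k hk y) :
    ∃ ψ : C(topHorn i, E), ∀ j (hj : j ≠ i) x,
      ψ ⟨stdSimplex.map j.succAbove x, stdSimplex_map_succAbove_mem_topHorn hj x⟩ = e j hj x := by
  let faces : C((_ : {j // j ≠ i}) × stdSimplex ℝ (Fin (n + 1)), E) :=
    ⟨fun t => e t.1.1 t.1.2 t.2, continuous_sigma fun j => (e j.1 j.2).continuous⟩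
  have factors : Function.FactorsThrough faces (topHornCover i) := fun s t h =>
    he s.1.1 t.1.1 s.1.2 t.1.2 s.2 t.2 (congrArg Subtype.val h)
  refine ⟨(isQuotientMap_topHornCover i).lift faces factors, fun j hj x => ?_⟩
  have hlift := DFunLike.congr_fun
    ((isQuotientMap_topHornCover i).lift_comp faces factors) ⟨⟨j, hj⟩, x⟩
  exact hlift

theorem exists_lift_of_faces {i : Fin (n + 2)} {Y : Type*} [TopologicalSpace Y] {y₀ : Y}
    (u : C(stdSimplex ℝ (Fin (n + 2)), Y))
    (e : ∀ j, j ≠ i → C(stdSimplex ℝ (Fin (n + 1)), PathsTo Y y₀))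
    (hu : ∀ j hj x, (e j hj x).1 0 = u (stdSimplex.map j.succAbove x))
    (he : ∀ j k hj hk x y, stdSimplex.map j.succAbove x = stdSimplex.map k.succAbove y →
      e j hj x = e k hk y) :
    ∃ w : C(stdSimplex ℝ (Fin (n + 2)), PathsTo Y y₀),
      (∀ j hj x, w (stdSimplex.map j.succAbove x) = e j hj x) ∧ ∀ x, (w x).1 0 = u x := by
  obtain ⟨ψ, hψ⟩ := exists_continuousMap_topHorn e he
  have hψu : ∀ a, (ψ a).1 0 = u a := by
    rintro ⟨z, j, hj, hz⟩
    obtain ⟨x, rfl⟩ := exists_stdSimplex_map_succAbove_eq hz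
    rw [hψ j hj, hu]
  obtain ⟨w, hwψ, hwu⟩ := (deformationIntoTopHorn i).exists_extension_lift hψu
  exact ⟨w, fun j hj x => (hwψ ⟨_, stdSimplex_map_succAbove_mem_topHorn hj x⟩).trans (hψ j hj x),
    hwu⟩

end Faces

section SingularSimplices

universe u

lemma toSSetObjEquiv_map_apply (X : TopCat.{u}) {n m : SimplexCategory} (f : n ⟶ m)
    (s : (TopCat.toSSet.obj X).obj (.op m)) (x : stdSimplex ℝ (Fin (n.len + 1))) :
    X.toSSetObjEquiv _ ((TopCat.toSSet.obj X).map f.op s) x =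
      X.toSSetObjEquiv _ s (stdSimplex.map f x) := rfl

/-- The `j`-th face of a horn of singular simplices in `E`. -/
noncomputable def singularFace {n : ℕ} {i : Fin (n + 2)} {E : TopCat.{u}}
    (Φ : (Λ[n + 1, i] : SSet.{u}) ⟶ TopCat.toSSet.obj E) (j : Fin (n + 2)) (hj : j ≠ i) :
    C(stdSimplex ℝ (Fin (n + 1)), E) :=
  E.toSSetObjEquiv _ (Φ.app _ (SSet.horn.face i j hj))

lemma singularFace_comp_toSSet_map_apply {n : ℕ} {i : Fin (n + 2)} {E Y : TopCat.{u}}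
    (Φ : (Λ[n + 1, i] : SSet.{u}) ⟶ TopCat.toSSet.obj E) (f : E ⟶ Y) (j : Fin (n + 2))
    (hj : j ≠ i) (x : stdSimplex ℝ (Fin (n + 1))) :
    singularFace (Φ ≫ TopCat.toSSet.map f) j hj x = f (singularFace Φ j hj x) := rfl

lemma singularFace_ι_comp_apply {n : ℕ} {i : Fin (n + 2)} {E : TopCat.{u}}
    (s : (Δ[n + 1] : SSet.{u}) ⟶ TopCat.toSSet.obj E) (j : Fin (n + 2)) (hj : j ≠ i)
    (x : stdSimplex ℝ (Fin (n + 1))) :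
    singularFace (Λ[n + 1, i].ι ≫ s) j hj x =
      E.toSSetObjEquiv _ (SSet.yonedaEquiv s) (stdSimplex.map j.succAbove x) := by
  have hface : s.app _ (Λ[n + 1, i].ι.app _ (SSet.horn.face i j hj)) =
      (TopCat.toSSet.obj E).map (SimplexCategory.δ j).op (SSet.yonedaEquiv s) := by
    change _ = (TopCat.toSSet.obj E).map _ (s.app _ (SSet.yonedaEquiv (𝟙 _)))
    rw [← NatTrans.naturality_apply]
    rfl
  exact DFunLike.congr_fun (congrArg (E.toSSetObjEquiv _) hface) x

lemma singularFace_map_castSucc_eq_map_succ {m : ℕ} {i : Fin (m + 3)} {E : TopCat.{u}}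
    (Φ : (Λ[m + 2, i] : SSet.{u}) ⟶ TopCat.toSSet.obj E) {a b : Fin (m + 2)} (hab : a ≤ b)
    (ha : a.castSucc ≠ i) (hb : b.succ ≠ i) (x : stdSimplex ℝ (Fin (m + 1))) :
    singularFace Φ a.castSucc ha (stdSimplex.map b.succAbove x) =
      singularFace Φ b.succ hb (stdSimplex.map a.succAbove x) := by
  refine (toSSetObjEquiv_map_apply E (SimplexCategory.δ b) _ x).symm.trans
    (Eq.trans ?_ (toSSetObjEquiv_map_apply E (SimplexCategory.δ a) _ x))
  rw [← NatTrans.naturality_apply, ← NatTrans.naturality_apply]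
  congr 3
  exact Subtype.ext <| SSet.stdSimplex.objEquiv.injective (SimplexCategory.δ_comp_δ hab).symm

lemma singularFace_castSucc_eq_succ {m : ℕ} {i : Fin (m + 3)} {E : TopCat.{u}}
    (Φ : (Λ[m + 2, i] : SSet.{u}) ⟶ TopCat.toSSet.obj E) {a b : Fin (m + 2)} (hab : a ≤ b)
    (ha : a.castSucc ≠ i) (hb : b.succ ≠ i) {x y : stdSimplex ℝ (Fin (m + 2))}
    (h : stdSimplex.map a.castSucc.succAbove x = stdSimplex.map b.succ.succAbove y) :
    singularFace Φ a.castSucc ha x = singularFace Φ b.succ hb y := by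
  have hx : x b = 0 := by
    have hb' : a.castSucc.succAbove b = b.succ :=
      Fin.succAbove_of_le_castSucc _ _ (Fin.castSucc_le_castSucc_iff.2 hab)
    rw [← stdSimplex_map_succAbove_apply_succAbove a.castSucc x, hb', h,
      stdSimplex_map_succAbove_apply_self]
  obtain ⟨x, rfl⟩ := exists_stdSimplex_map_succAbove_eq hx
  have hδ : a.castSucc.succAbove ∘ b.succAbove = b.succ.succAbove ∘ a.succAbove :=
    funext fun t => congrArg (fun f => f.toOrderHom t) (SimplexCategory.δ_comp_δ hab).symm
  obtain rfl : stdSimplex.map a.succAbove x = y := by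
    apply stdSimplex_map_succAbove_injective b.succ
    rw [← h, stdSimplex.map_comp_apply, stdSimplex.map_comp_apply, hδ]
  exact singularFace_map_castSucc_eq_map_succ Φ hab ha hb x

lemma singularFace_eq_singularFace {n : ℕ} {i : Fin (n + 2)} {E : TopCat.{u}}
    (Φ : (Λ[n + 1, i] : SSet.{u}) ⟶ TopCat.toSSet.obj E) (j k : Fin (n + 2)) (hj : j ≠ i)
    (hk : k ≠ i) (x y : stdSimplex ℝ (Fin (n + 1)))
    (h : stdSimplex.map j.succAbove x = stdSimplex.map k.succAbove y) :
    singularFace Φ j hj x = singularFace Φ k hk y := by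
  wlog hjk : j ≤ k generalizing j k x y
  · exact (this k j hk hj y x h.symm (le_of_not_ge hjk)).symm
  rcases hjk.eq_or_lt with rfl | hjk
  · rw [stdSimplex_map_succAbove_injective _ h]
  obtain _ | m := n
  · omega
  obtain ⟨a, rfl⟩ := Fin.exists_castSucc_eq.2 (hjk.trans_le (Fin.le_last k)).ne
  obtain ⟨b, rfl⟩ := Fin.exists_succ_eq.2 ((Fin.zero_le _).trans_lt hjk).ne'
  exact singularFace_castSucc_eq_succ Φ (Fin.castSucc_lt_succ_iff.1 hjk) hj hk h

/-- The path fibration over `Y`, sending a path ending at `y₀` to its starting point. -/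
def evalZero (Y : Type u) [TopologicalSpace Y] (y₀ : Y) :
    TopCat.of (PathsTo Y y₀) ⟶ TopCat.of Y :=
  TopCat.ofHom ⟨fun γ => γ.1 0, by fun_prop⟩

lemma hasLiftingProperty_horn_toSSet_map_evalZero (Y : Type u) [TopologicalSpace Y] (y₀ : Y)
    {n : ℕ} (i : Fin (n + 2)) :
    HasLiftingProperty (Λ[n + 1, i].ι : _ ⟶ (Δ[n + 1] : SSet.{u}))
      (TopCat.toSSet.map (evalZero Y y₀)) := by
  refine ⟨fun {Φ u} sq => ?_⟩
  let E := TopCat.of (PathsTo Y y₀)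
  obtain ⟨w, hwe, hwu⟩ := exists_lift_of_faces
    ((TopCat.of Y).toSSetObjEquiv _ (SSet.yonedaEquiv u)) (singularFace (E := E) Φ)
    (fun j hj x => by
      rw [← singularFace_ι_comp_apply (i := i) u j hj, ← sq.w]
      exact (singularFace_comp_toSSet_map_apply Φ (evalZero Y y₀) j hj x).symm)
    (singularFace_eq_singularFace Φ)
  let W : (TopCat.toSSet.obj E).obj (.op ⦋n + 1⦌) := (E.toSSetObjEquiv (.op ⦋n + 1⦌)).symm w
  refine ⟨⟨⟨SSet.yonedaEquiv.symm W, ?_, ?_⟩⟩⟩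
  · refine SSet.horn.hom_ext _ _ fun j hj => (E.toSSetObjEquiv _).injective ?_
    ext1 x
    exact hwe j hj x
  · apply SSet.yonedaEquiv.injective
    rw [SSet.yonedaEquiv_comp, Equiv.apply_symm_apply]
    apply ((TopCat.of Y).toSSetObjEquiv _).injective
    ext1 x
    exact hwu x

theorem rlp_toSSet_map_evalZero (Y : Type u) [TopologicalSpace Y] (y₀ : Y) :
    SSet.modelCategoryQuillen.J.rlp (TopCat.toSSet.map (evalZero Y y₀)) := by
  intro A B f hf
  simp only [SSet.modelCategoryQuillen.J, MorphismProperty.iSup_iff] at hf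
  obtain ⟨n, ⟨i⟩⟩ := hf
  exact hasLiftingProperty_horn_toSSet_map_evalZero _ _ i

end SingularSimplices

/-! ### Contractibility from an anodyne vertex -/

section AnodyneVertex

universe u

lemma contractibleSpace_of_section_evalZero {Y : Type*} [TopologicalSpace Y] {y₀ : Y}
    (s : C(Y, PathsTo Y y₀)) (hs : ∀ y, (s y).1 0 = y) : ContractibleSpace Y := by
  rw [contractible_iff_id_nullhomotopic]
  exact ⟨y₀, ⟨{
    toFun := fun q => (s q.2).1 q.1
    continuous_toFun := by fun_prop
    map_zero_left := hs
    map_one_left := fun y => (s y).2 }⟩⟩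

lemma commSq_ofSimplex_toSSet_map {Z : SSet.{u}} {v : Z _⦋0⦌} {E Y : TopCat.{u}} {f : E ⟶ Y}
    {a : Z ⟶ TopCat.toSSet.obj Y} {e : E} (he : f e = TopCat.toSSetObj₀Equiv (a.app _ v)) :
    CommSq (SSet.const (TopCat.toSSetObj₀Equiv.symm e)) (SSet.Subcomplex.ofSimplex v).ι
      (TopCat.toSSet.map f) a := by
  constructor
  ext n ⟨_, φ, rfl⟩
  change (TopCat.toSSet.map f).app n ((TopCat.toSSet.obj E).map (n.unop.const ⦋0⦌ 0).op
    (TopCat.toSSetObj₀Equiv.symm e)) = a.app n (Z.map φ v)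
  obtain rfl : (n.unop.const ⦋0⦌ 0).op = φ := Quiver.Hom.unop_inj (Subsingleton.elim _ _)
  rw [NatTrans.naturality_apply, NatTrans.naturality_apply]
  congr 1
  exact TopCat.toSSetObj₀Equiv.injective he

theorem contractibleSpace_toTop_of_anodyneExtensions {Z : SSet.{u}} (v : Z _⦋0⦌)
    (hv : SSet.anodyneExtensions (SSet.Subcomplex.ofSimplex v).ι) :
    ContractibleSpace (SSet.toTop.obj Z) := by
  let η : Z ⟶ TopCat.toSSet.obj (SSet.toTop.obj Z) := sSetTopAdj.unit.app Z
  let y₀ : SSet.toTop.obj Z := TopCat.toSSetObj₀Equiv (η.app _ v)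
  let constPath : PathsTo (SSet.toTop.obj Z) y₀ := ⟨ContinuousMap.const _ y₀, rfl⟩
  have sq := commSq_ofSimplex_toSSet_map (f := evalZero _ y₀) (a := η) (e := constPath) rfl
  have := hv _ (rlp_toSSet_map_evalZero _ y₀)
  let s := (sSetTopAdj.homEquiv _ _).symm sq.lift
  have hs : s ≫ evalZero _ y₀ = 𝟙 _ := by
    rw [← sSetTopAdj.homEquiv_naturality_right_symm, sq.fac_right]
    exact sSetTopAdj.left_triangle_components Z
  exact contractibleSpace_of_section_evalZero s.hom fun y => ConcreteCategory.congr_hom hs y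

end AnodyneVertex

/-! ### Orbit simplicial sets -/

section OrbitSSet

universe u

variable {Γ : Type*} {X : SSet.{u}} (c : Γ → (X ⟶ X))

/-- The quotient of the simplicial set `X` by the relation generated by `x ~ c g x`; for a group
action `c` its simplices are the orbits of simplices of `X`. -/
def orbitSSet : SSet.{u} where
  obj n := Quot fun x y : X.obj n => ∃ g, (c g).app n x = y
  map φ := ↾Quot.map (X.map φ) (by
    rintro x _ ⟨g, rfl⟩
    exact ⟨g, NatTrans.naturality_apply (c g) φ x⟩)
  map_id n := by
    ext ⟨x⟩
    exact congrArg (Quot.mk _) (by simp)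
  map_comp φ ψ := by
    ext ⟨x⟩
    exact congrArg (Quot.mk _) (by simp)

/-- The projection of a simplicial set to its orbit simplicial set. -/
def toOrbitSSet : X ⟶ orbitSSet c where
  app _ := ↾Quot.mk _
  naturality _ _ _ := rfl

lemma comp_toOrbitSSet (g : Γ) : c g ≫ toOrbitSSet c = toOrbitSSet c := by
  ext n x
  exact (Quot.sound ⟨g, rfl⟩).symm

lemma orbitSSet_hom_ext {T : SSet.{u}} {a b : orbitSSet c ⟶ T}
    (h : toOrbitSSet c ≫ a = toOrbitSSet c ≫ b) : a = b := by
  ext n ⟨x⟩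
  exact ConcreteCategory.congr_hom (NatTrans.congr_app h n) x

/-- The morphism from the orbit simplicial set induced by an invariant morphism. -/
def orbitSSetDesc {T : SSet.{u}} (f : X ⟶ T) (hf : ∀ g, c g ≫ f = f) : orbitSSet c ⟶ T where
  app n := ↾Quot.lift (f.app n) (by
    rintro x _ ⟨g, rfl⟩
    exact (ConcreteCategory.congr_hom (NatTrans.congr_app (hf g) n) x).symm)
  naturality n m φ := by
    ext ⟨x⟩
    exact NatTrans.naturality_apply f φ x

/-- The topological counterpart of `orbitSSet`: the quotient of the realization of `X` by the
realization of the family `c`. -/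
abbrev OrbitSpace : Type u :=
  Quot fun x y : SSet.toTop.obj X => ∃ g, SSet.toTop.map (c g) x = y

/-- The projection of the realization of `X` to its quotient space. -/
noncomputable def toOrbitSpace : SSet.toTop.obj X ⟶ TopCat.of (OrbitSpace c) :=
  TopCat.ofHom ⟨Quot.mk _, continuous_quot_mk⟩

lemma toTop_map_comp_toOrbitSpace (g : Γ) :
    SSet.toTop.map (c g) ≫ toOrbitSpace c = toOrbitSpace c := by
  ext x
  exact (Quot.sound ⟨g, rfl⟩).symm

/-- The comparison map from the quotient of the realization to the realization of the quotient. -/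
noncomputable def orbitSpaceToTop : TopCat.of (OrbitSpace c) ⟶ SSet.toTop.obj (orbitSSet c) :=
  TopCat.ofHom ⟨Quot.lift (SSet.toTop.map (toOrbitSSet c)) (by
    rintro x _ ⟨g, rfl⟩
    rw [← ConcreteCategory.comp_apply, ← Functor.map_comp, comp_toOrbitSSet]),
    continuous_quot_lift _ (SSet.toTop.map (toOrbitSSet c)).hom.continuous⟩

/-- The inverse comparison map, which exists because realization is a left adjoint. -/
noncomputable def toTopOrbitSSetDesc :
    SSet.toTop.obj (orbitSSet c) ⟶ TopCat.of (OrbitSpace c) :=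
  (sSetTopAdj.homEquiv _ _).symm <| orbitSSetDesc c (sSetTopAdj.homEquiv _ _ (toOrbitSpace c))
    fun g => by rw [← sSetTopAdj.homEquiv_naturality_left, toTop_map_comp_toOrbitSpace]

lemma toTop_map_toOrbitSSet_comp_desc :
    SSet.toTop.map (toOrbitSSet c) ≫ toTopOrbitSSetDesc c = toOrbitSpace c := by
  rw [toTopOrbitSSetDesc, ← sSetTopAdj.homEquiv_naturality_left_symm, Equiv.symm_apply_eq]
  rfl

/-- Realization commutes with passing to orbits. -/
noncomputable def orbitSpaceIso :
    TopCat.of (OrbitSpace c) ≅ SSet.toTop.obj (orbitSSet c) where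
  hom := orbitSpaceToTop c
  inv := toTopOrbitSSetDesc c
  hom_inv_id := by
    ext ⟨x⟩
    exact ConcreteCategory.congr_hom (toTop_map_toOrbitSSet_comp_desc c) x
  inv_hom_id := by
    apply (sSetTopAdj.homEquiv _ _).injective
    apply orbitSSet_hom_ext
    rw [← sSetTopAdj.homEquiv_naturality_left, ← sSetTopAdj.homEquiv_naturality_left,
      reassoc_of% toTop_map_toOrbitSSet_comp_desc, Category.comp_id]
    rfl

end OrbitSSet

/-! ### Conjugation and Sylow subgroups -/

section Conjugation

variable {G : Type*} [Group G]

lemma mem_conjSub {g x : G} {P : Subgroup G} : x ∈ conjSub g P ↔ g * x * g⁻¹ ∈ P := by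
  refine Subgroup.mem_map_equiv.trans ?_
  rw [MulAut.conj_symm_apply, inv_inv]

lemma conjSub_one (P : Subgroup G) : conjSub 1 P = P := by
  ext x
  simp [mem_conjSub]

lemma conjSub_conjSub (g h : G) (P : Subgroup G) :
    conjSub h (conjSub g P) = conjSub (g * h) P := by
  ext x
  simp [mem_conjSub, mul_assoc]

lemma conjSub_inv_conjSub (g : G) (P : Subgroup G) : conjSub g⁻¹ (conjSub g P) = P := by
  rw [conjSub_conjSub, mul_inv_cancel, conjSub_one]

lemma conjSub_le_conjSub_iff {g : G} {P Q : Subgroup G} : conjSub g P ≤ conjSub g Q ↔ P ≤ Q :=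
  (MulAut.conj g⁻¹).mapSubgroup.le_iff_le

lemma conjSub_lt_conjSub_iff {g : G} {P Q : Subgroup G} : conjSub g P < conjSub g Q ↔ P < Q :=
  (MulAut.conj g⁻¹).mapSubgroup.lt_iff_lt

lemma conjSub_sup (g : G) (P Q : Subgroup G) : conjSub g (P ⊔ Q) = conjSub g P ⊔ conjSub g Q :=
  Subgroup.map_sup _ _ _

lemma conjSub_inv_le_iff {g : G} {P Q : Subgroup G} : conjSub g⁻¹ P ≤ Q ↔ P ≤ conjSub g Q := by
  rw [← conjSub_le_conjSub_iff (g := g), conjSub_conjSub, inv_mul_cancel, conjSub_one]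

lemma card_conjSub (g : G) (P : Subgroup G) : Nat.card (conjSub g P) = Nat.card P :=
  Subgroup.card_map_of_injective (MulAut.conj g⁻¹).injective

lemma conjSub_eq_self_of_mem {N : Subgroup G} {g : G} (hg : g ∈ N) : conjSub g N = N := by
  ext x
  rw [mem_conjSub, N.mul_mem_cancel_right (N.inv_mem hg), N.mul_mem_cancel_left hg]

lemma mem_normalizer_iff_conjSub_eq {g : G} {P : Subgroup G} :
    g ∈ Subgroup.normalizer (P : Set G) ↔ conjSub g P = P := by
  simp only [Subgroup.mem_normalizer_iff, SetLike.ext_iff, mem_conjSub, Iff.comm]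

lemma inf_normalizer_le_normalizer_sup (P Q : Subgroup G) :
    Subgroup.normalizer (P : Set G) ⊓ Subgroup.normalizer (Q : Set G) ≤
      Subgroup.normalizer ((P ⊔ Q : Subgroup G) : Set G) := by
  intro x hx
  obtain ⟨hP, hQ⟩ := Subgroup.mem_inf.1 hx
  rw [mem_normalizer_iff_conjSub_eq] at hP hQ
  rw [mem_normalizer_iff_conjSub_eq, conjSub_sup, hP, hQ]

variable {n : ℕ}

lemma mem_chainNorm_iff {f : Fin (n + 1) → Subgroup G} {g : G} :
    g ∈ chainNorm f ↔ conjSub g ∘ f = f := by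
  simp [chainNorm, Subgroup.mem_iInf, mem_normalizer_iff_conjSub_eq, funext_iff]

lemma chainNorm_le (f : Fin (n + 1) → Subgroup G) (k : Fin (n + 1)) :
    chainNorm f ≤ Subgroup.normalizer (f k : Set G) :=
  iInf_le _ k

lemma chainNorm_le_comp {m : ℕ} (f : Fin (n + 1) → Subgroup G) (s : Fin (m + 1) → Fin (n + 1)) :
    chainNorm f ≤ chainNorm (f ∘ s) :=
  le_iInf fun k => chainNorm_le f (s k)

lemma conjSub_chainNorm (g : G) (f : Fin (n + 1) → Subgroup G) :
    conjSub g (chainNorm f) = chainNorm (conjSub g ∘ f) := by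
  ext x
  simp only [mem_conjSub, mem_chainNorm_iff, funext_iff, Function.comp_apply]
  refine forall_congr' fun k => ?_
  rw [← conjSub_conjSub, ← conjSub_conjSub]
  constructor <;> intro h
  · simpa only [conjSub_conjSub g⁻¹, inv_mul_cancel, conjSub_one] using congrArg (conjSub g) h
  · rw [h, conjSub_inv_conjSub]

end Conjugation

section SylowSubgroups

variable {G : Type*} [Group G] {p : ℕ} {N N' P Q R S T : Subgroup G}

/-- `P` is a finite `p`-subgroup of a possibly infinite group. -/
structure IsFinitePSubgroup (p : ℕ) (P : Subgroup G) : Prop where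
  finite : Finite P
  isPGroup : IsPGroup p P

namespace IsFinitePSubgroup

lemma mono (hP : IsFinitePSubgroup p P) (h : Q ≤ P) : IsFinitePSubgroup p Q where
  finite := have := hP.finite; Finite.of_injective _ (Subgroup.inclusion_injective h)
  isPGroup := hP.isPGroup.to_le h

lemma conj (hP : IsFinitePSubgroup p P) (g : G) : IsFinitePSubgroup p (conjSub g P) where
  finite :=
    have := hP.finite
    Finite.of_equiv P (P.equivMapOfInjective _ (MulAut.conj g⁻¹).injective).toEquiv
  isPGroup := hP.isPGroup.map _

lemma sup (hQ : IsFinitePSubgroup p Q) (hP : IsFinitePSubgroup p P)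
    (h : Q ≤ Subgroup.normalizer (P : Set G)) : IsFinitePSubgroup p (Q ⊔ P) where
  finite := by
    have := hQ.finite
    have := hP.finite
    have hmul : ((Q ⊔ P : Subgroup G) : Set G).Finite := by
      rw [Subgroup.coe_mul_of_left_le_normalizer_right Q P h]
      exact (Set.toFinite (Q : Set G)).mul (Set.toFinite (P : Set G))
    exact hmul
  isPGroup := hQ.isPGroup.to_sup_of_normal_right' hP.isPGroup h

lemma eq_of_le_of_card_le (hQ : IsFinitePSubgroup p Q) (h : P ≤ Q)
    (hcard : Nat.card Q ≤ Nat.card P) : P = Q :=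
  have := hQ.finite
  Subgroup.eq_of_le_of_card_ge h hcard

lemma card_lt_card (hQ : IsFinitePSubgroup p Q) (h : P < Q) : Nat.card P < Nat.card Q :=
  lt_of_not_ge fun hcard => h.ne (hQ.eq_of_le_of_card_le h.le hcard)

lemma lt_inf_normalizer [Fact p.Prime] (hR : IsFinitePSubgroup p R) (h : Q < R) :
    Q < R ⊓ Subgroup.normalizer (Q : Set G) := by
  have := hR.finite
  have := hR.isPGroup.isNilpotent
  have hproper : Q.subgroupOf R < ⊤ := by
    rw [lt_top_iff_ne_top, ne_eq, Subgroup.subgroupOf_eq_top]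
    exact h.not_ge
  have hgrow := Group.normalizerCondition_of_isNilpotent _ hproper
  rw [← Subgroup.subgroupOf_normalizer_eq h.le] at hgrow
  obtain ⟨x, hxN, hxQ⟩ := SetLike.exists_of_lt hgrow
  exact (le_inf h.le Subgroup.le_normalizer).lt_of_not_ge fun hle => hxQ (hle ⟨x.2, hxN⟩)

lemma isSylowIn_self (hP : IsFinitePSubgroup p P) : IsSylowIn p P P :=
  ⟨le_rfl, hP.finite, hP.isPGroup, fun _ hQ _ _ => ⟨1, P.one_mem, by rwa [conjSub_one]⟩⟩

end IsFinitePSubgroup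

namespace IsSylowIn

lemma isFinitePSubgroup (hS : IsSylowIn p N S) : IsFinitePSubgroup p S :=
  ⟨hS.2.1, hS.2.2.1⟩

lemma exists_conjSub_le (hS : IsSylowIn p N S) (hTN : T ≤ N) (hT : IsFinitePSubgroup p T) :
    ∃ g ∈ N, conjSub g T ≤ S :=
  hS.2.2.2 T hTN hT.finite hT.isPGroup

lemma conj (hS : IsSylowIn p N S) (g : G) : IsSylowIn p (conjSub g N) (conjSub g S) := by
  have hSg := hS.isFinitePSubgroup.conj g
  refine ⟨conjSub_le_conjSub_iff.2 hS.1, hSg.finite, hSg.isPGroup, fun Q hQN hfin hpg => ?_⟩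
  obtain ⟨x, hx, hxQ⟩ := hS.exists_conjSub_le (conjSub_inv_le_iff.2 hQN)
    (IsFinitePSubgroup.conj ⟨hfin, hpg⟩ g⁻¹)
  refine ⟨g⁻¹ * x * g, mem_conjSub.2 (by simpa [mul_assoc] using hx), ?_⟩
  rwa [← conjSub_conjSub, conjSub_le_conjSub_iff, ← conjSub_conjSub]

lemma conj_of_mem (hS : IsSylowIn p N S) {g : G} (hg : g ∈ N) : IsSylowIn p N (conjSub g S) := by
  simpa only [conjSub_eq_self_of_mem hg] using hS.conj g

lemma card_le (hS : IsSylowIn p N S) (hTN : T ≤ N) (hT : IsFinitePSubgroup p T) :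
    Nat.card T ≤ Nat.card S := by
  obtain ⟨g, -, hg⟩ := hS.exists_conjSub_le hTN hT
  have := hS.isFinitePSubgroup.finite
  exact card_conjSub g T ▸ Subgroup.card_le_of_le hg

lemma eq_of_le (hS : IsSylowIn p N S) (hTN : T ≤ N) (hT : IsFinitePSubgroup p T) (h : S ≤ T) :
    S = T :=
  hT.eq_of_le_of_card_le h (hS.card_le hTN hT)

lemma exists_conjSub_eq (hS : IsSylowIn p N S) (hTN : T ≤ N) (hT : IsFinitePSubgroup p T)
    (hcard : Nat.card S ≤ Nat.card T) : ∃ g ∈ N, conjSub g T = S := by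
  obtain ⟨g, hgN, hg⟩ := hS.exists_conjSub_le hTN hT
  exact ⟨g, hgN, hS.isFinitePSubgroup.eq_of_le_of_card_le hg ((card_conjSub g T).symm ▸ hcard)⟩

lemma exists_conjSub_eq_of_isSylowIn (hS : IsSylowIn p N S) (hT : IsSylowIn p N T) :
    ∃ g ∈ N, conjSub g T = S :=
  hS.exists_conjSub_eq hT.1 hT.isFinitePSubgroup (hT.card_le hS.1 hS.isFinitePSubgroup)

-- Normalizers grow in finite `p`-groups, so being Sylow is detected inside the normalizer of `Q`.
lemma of_inf_normalizer_le [Fact p.Prime] (hQ : IsSylowIn p N' Q) (hS : IsSylowIn p N S)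
    (hQN : Q ≤ N) (hN : N ⊓ Subgroup.normalizer (Q : Set G) ≤ N') : IsSylowIn p N Q := by
  obtain ⟨g, hg, hgQ⟩ := hS.exists_conjSub_le hQN hQ.isFinitePSubgroup
  have hS' := hS.conj_of_mem (N.inv_mem hg)
  have hQS : Q ≤ conjSub g⁻¹ S := conjSub_inv_le_iff.1 (by rwa [inv_inv])
  rcases hQS.eq_or_lt with rfl | hlt
  · exact hS'
  have hgrow := hS'.isFinitePSubgroup.lt_inf_normalizer hlt
  exact absurd (hQ.eq_of_le ((inf_le_inf_right _ hS'.1).trans hN)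
    (hS'.isFinitePSubgroup.mono inf_le_left) hgrow.le) hgrow.ne

lemma mem_of_nonempty {C : Set (Subgroup G)} (hS : IsSylowIn p ⊤ S) (hne : C.Nonempty)
    (hC : ∀ P ∈ C, IsFinitePSubgroup p P) (hconj : ∀ P ∈ C, ∀ g : G, conjSub g P ∈ C)
    (hover : ∀ P ∈ C, ∀ Q, P ≤ Q → IsFinitePSubgroup p Q → Q ∈ C) : S ∈ C := by
  obtain ⟨P, hP⟩ := hne
  obtain ⟨g, -, hg⟩ := hS.exists_conjSub_le le_top (hC P hP)
  exact hover _ (hconj P hP g) S hg hS.isFinitePSubgroup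

end IsSylowIn

end SylowSubgroups

/-! ### Chains of finite `p`-subgroups -/

section Chains

variable {G : Type*} [Group G] {p n : ℕ}

/-- A strictly increasing chain of finite `p`-subgroups. -/
structure IsPChain (p : ℕ) (f : Fin n → Subgroup G) : Prop where
  strictMono : StrictMono f
  isFinitePSubgroup (k : Fin n) : IsFinitePSubgroup p (f k)

namespace IsPChain

lemma comp {m : ℕ} {f : Fin n → Subgroup G} (hf : IsPChain p f) {s : Fin m → Fin n}
    (hs : StrictMono s) : IsPChain p (f ∘ s) :=
  ⟨hf.strictMono.comp hs, fun _ => hf.isFinitePSubgroup _⟩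

lemma conj {f : Fin n → Subgroup G} (hf : IsPChain p f) (g : G) : IsPChain p (conjSub g ∘ f) :=
  ⟨fun _ _ hkl => conjSub_lt_conjSub_iff.2 (hf.strictMono hkl),
    fun k => (hf.isFinitePSubgroup k).conj g⟩

lemma card_strictMono {f : Fin n → Subgroup G} (hf : IsPChain p f) :
    StrictMono fun k => Nat.card (f k) :=
  fun _ l hkl => (hf.isFinitePSubgroup l).card_lt_card (hf.strictMono hkl)

lemma eq_of_conj_face_eq {f : Fin (n + 1) → Subgroup G} (hf : IsPChain p f) {a b : Fin (n + 1)}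
    {g : G} (h : conjSub g ∘ f ∘ a.succAbove = f ∘ b.succAbove) : a = b := by
  refine Fin.succAbove_left_injective (funext fun k => hf.card_strictMono.injective ?_)
  exact (card_conjSub g _).symm.trans (congrArg (fun P : Subgroup G => Nat.card P) (congrFun h k))

variable {f : Fin (n + 1) → Subgroup G} {Q : Subgroup G}

lemma exists_isSylowIn (hf : IsPChain p f) (hG : PseudoFiniteAt p G) :
    ∃ S, IsSylowIn p (chainNorm f) S :=
  hG n f hf.strictMono.monotone (fun k => (hf.isFinitePSubgroup k).finite)
    fun k => (hf.isFinitePSubgroup k).isPGroup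

lemma head_le_of_isSylowIn (hf : IsPChain p f) (hQ : IsSylowIn p (chainNorm f) Q) : f 0 ≤ Q := by
  have hle : f 0 ≤ chainNorm f :=
    le_iInf fun k => (hf.strictMono.monotone (Fin.zero_le k)).trans Subgroup.le_normalizer
  obtain ⟨g, hg, hgQ⟩ := hQ.exists_conjSub_le hle (hf.isFinitePSubgroup 0)
  rwa [mem_normalizer_iff_conjSub_eq.1 (chainNorm_le f 0 hg)] at hgQ

lemma eq_zero_of_isSylowIn_head [Fact p.Prime] (hf : IsPChain p f)
    (h : IsSylowIn p (chainNorm f) (f 0)) : n = 0 := by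
  by_contra hn
  obtain ⟨m, rfl⟩ := Nat.exists_eq_succ_of_ne_zero hn
  have hlt : f 0 < f 1 := hf.strictMono Fin.zero_lt_one
  have hone := (hf.isFinitePSubgroup 1).isSylowIn_self
  refine hlt.ne ((h.of_inf_normalizer_le hone hlt.le (le_iInf ?_)).eq_of_le le_rfl
    (hf.isFinitePSubgroup 1) hlt.le)
  refine Fin.cases inf_le_right fun k => inf_le_left.trans ?_
  exact (hf.strictMono.monotone (Fin.succ_le_succ_iff.2 k.zero_le)).trans Subgroup.le_normalizer

end IsPChain

lemma PseudoFiniteAt.exists_isSylowIn_top (hG : PseudoFiniteAt p G) :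
    ∃ S : Subgroup G, IsSylowIn p ⊤ S := by
  have htop : chainNorm (fun _ : Fin 1 => (⊥ : Subgroup G)) = ⊤ := by
    simp only [chainNorm, Subgroup.normalizer_eq_top, iInf_const]
  rw [← htop]
  exact IsPChain.exists_isSylowIn
    ⟨Subsingleton.strictMono (α := Fin 1) _, fun _ => ⟨inferInstance, IsPGroup.of_bot⟩⟩ hG

lemma IsSylowIn.isSylowIn_top_of_vertex [Fact p.Prime] (hG : PseudoFiniteAt p G)
    {f : Fin 1 → Subgroup G} (h : IsSylowIn p (chainNorm f) (f 0)) : IsSylowIn p ⊤ (f 0) := by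
  obtain ⟨S, hS⟩ := hG.exists_isSylowIn_top
  refine h.of_inf_normalizer_le hS le_top (le_iInf fun k => ?_)
  rw [Fin.fin_one_eq_zero k]
  exact inf_le_right

lemma IsSylowIn.exists_conj_of_conj_chain {f : Fin (n + 1) → Subgroup G} {Q Q' : Subgroup G}
    {g : G} (hQ : IsSylowIn p (chainNorm f) Q)
    (hQ' : IsSylowIn p (chainNorm (conjSub g ∘ f)) Q') :
    ∃ x, conjSub x ∘ f = conjSub g ∘ f ∧ conjSub x Q = Q' := by
  have hQg := hQ.conj g
  rw [conjSub_chainNorm] at hQg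
  obtain ⟨x, hx, hxQ⟩ := hQ'.exists_conjSub_eq_of_isSylowIn hQg
  rw [mem_chainNorm_iff] at hx
  refine ⟨g * x, ?_, by rwa [← conjSub_conjSub]⟩
  rw [← hx]
  exact funext fun k => (conjSub_conjSub g x (f k)).symm

end Chains

/-! ### Irredundant chains -/

section Irredundant

variable {G : Type*} [Group G] {p n : ℕ}

/-- The chain `P_0 < ⋯ < P_{n+1}` of finite `p`-subgroups satisfies `P_{i+1} = Q P_i` for the
Sylow `p`-subgroup `Q` of its normalizer. Such chains are matched with their face obtained by
deleting `P_{i+1}`, that is, with `f ∘ i.succ.succAbove`. -/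
structure IrredundantAt (p : ℕ) (f : Fin (n + 2) → Subgroup G) (Q : Subgroup G)
    (i : Fin (n + 1)) : Prop extends IsPChain p f where
  isSylowIn : IsSylowIn p (chainNorm f) Q
  succ_eq : f i.succ = Q ⊔ f i.castSucc

namespace IrredundantAt

variable {f f' : Fin (n + 2) → Subgroup G} {Q Q' : Subgroup G} {i i' : Fin (n + 1)}

lemma conj (h : IrredundantAt p f Q i) (g : G) :
    IrredundantAt p (conjSub g ∘ f) (conjSub g Q) i where
  toIsPChain := h.toIsPChain.conj g
  isSylowIn := conjSub_chainNorm g f ▸ h.isSylowIn.conj g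
  succ_eq := by simp only [Function.comp_apply, h.succ_eq, conjSub_sup]

lemma isPChain_face (h : IrredundantAt p f Q i) : IsPChain p (f ∘ i.succ.succAbove) :=
  h.toIsPChain.comp (Fin.strictMono_succAbove _)

lemma not_le (h : IrredundantAt p f Q i) : ¬ Q ≤ f i.castSucc := fun hle =>
  (h.strictMono Fin.castSucc_lt_succ).ne' (h.succ_eq.trans (sup_eq_right.2 hle))

lemma le_iff (h : IrredundantAt p f Q i) {k : Fin (n + 2)} : Q ≤ f k ↔ i.castSucc < k := by
  refine ⟨fun hk => lt_of_not_ge fun hle => h.not_le (hk.trans (h.strictMono.monotone hle)),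
    fun hk => ?_⟩
  calc Q ≤ f i.succ := h.succ_eq ▸ le_sup_left
    _ ≤ f k := h.strictMono.monotone (Fin.castSucc_lt_iff_succ_le.1 hk)

lemma le_face_iff (h : IrredundantAt p f Q i) {k : Fin (n + 1)} :
    Q ≤ f (i.succ.succAbove k) ↔ i < k := by
  rw [h.le_iff, ← Fin.succAbove_succ_self i, (Fin.strictMono_succAbove _).lt_iff_lt]

lemma isSylowIn_face [Fact p.Prime] (hG : PseudoFiniteAt p G) (h : IrredundantAt p f Q i) :
    IsSylowIn p (chainNorm (f ∘ i.succ.succAbove)) Q := by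
  obtain ⟨S, hS⟩ := h.isPChain_face.exists_isSylowIn hG
  refine h.isSylowIn.of_inf_normalizer_le hS (h.isSylowIn.1.trans (chainNorm_le_comp f _))
    (le_iInf fun k => ?_)
  rcases Fin.eq_self_or_eq_succAbove i.succ k with rfl | ⟨k, rfl⟩
  · rw [h.succ_eq]
    refine le_trans (le_inf inf_le_right (inf_le_left.trans ?_))
      (inf_normalizer_le_normalizer_sup _ _)
    simpa using chainNorm_le (f ∘ i.succ.succAbove) i
  · exact inf_le_left.trans (chainNorm_le (f ∘ i.succ.succAbove) k)

lemma eq_of_face_eq (h : IrredundantAt p f Q i) (h' : IrredundantAt p f' Q i')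
    (he : f ∘ i.succ.succAbove = f' ∘ i'.succ.succAbove) : f = f' := by
  obtain rfl : i = i' := eq_of_forall_gt_iff fun k => by
    rw [← h.le_face_iff, ← h'.le_face_iff]
    exact iff_of_eq (congrArg (Q ≤ ·) (congrFun he k))
  funext k
  rcases Fin.eq_self_or_eq_succAbove i.succ k with rfl | ⟨k, rfl⟩
  · rw [h.succ_eq, h'.succ_eq]
    simpa using congrArg (Q ⊔ ·) (congrFun he i)
  · exact congrFun he k

lemma exists_conj_eq_of_conj_face_eq [Fact p.Prime] (hG : PseudoFiniteAt p G)
    (h : IrredundantAt p f Q i) (h' : IrredundantAt p f' Q' i') {g : G}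
    (he : conjSub g ∘ f ∘ i.succ.succAbove = f' ∘ i'.succ.succAbove) :
    ∃ x, conjSub x ∘ f = f' := by
  obtain ⟨x, hx, rfl⟩ := (h.isSylowIn_face hG).exists_conj_of_conj_chain
    (he ▸ h'.isSylowIn_face hG)
  exact ⟨x, (h.conj x).eq_of_face_eq h' (hx.trans he)⟩

-- The face skips `P_{i+1} = Q P_i`: its terms containing `Q` contain `P_{i+1}` strictly.
lemma face_ne_sup (h : IrredundantAt p f Q i) {k l : Fin (n + 1)}
    (hk : ¬ Q ≤ f (i.succ.succAbove k)) :
    f (i.succ.succAbove l) ≠ Q ⊔ f (i.succ.succAbove k) := by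
  intro he
  have hki : k ≤ i := not_lt.1 fun hik => hk (h.le_face_iff.2 hik)
  have hil : i < l := h.le_face_iff.1 (he ▸ le_sup_left)
  have hlt : f i.succ < f (i.succ.succAbove l) := by
    rw [Fin.succAbove_of_lt_succ _ _ (Fin.succ_lt_succ_iff.2 hil)]
    exact h.strictMono (Fin.succ_lt_succ_iff.2 hil)
  refine hlt.not_ge ?_
  rw [he, h.succ_eq, ← Fin.succAbove_succ_self i]
  exact sup_le_sup_left (h.isPChain_face.strictMono.monotone hki) Q

lemma conj_ne_face [Fact p.Prime] (hG : PseudoFiniteAt p G) {f' : Fin (n + 3) → Subgroup G}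
    {i' : Fin (n + 2)} (h : IrredundantAt p f Q i) (h' : IrredundantAt p f' Q' i') (g : G) :
    conjSub g ∘ f ≠ f' ∘ i'.succ.succAbove := by
  intro he
  obtain ⟨x, hx, rfl⟩ := h.isSylowIn.exists_conj_of_conj_chain (he ▸ h'.isSylowIn_face hG)
  have hface := h.conj x
  rw [hx, he] at hface
  exact h'.face_ne_sup hface.not_le hface.succ_eq

lemma index_eq_and_card_eq_of_conj_eq (h : IrredundantAt p f Q i) (h' : IrredundantAt p f' Q' i')
    {g : G} (he : conjSub g ∘ f = f') : i = i' ∧ Nat.card Q = Nat.card Q' := by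
  obtain ⟨x, hx, rfl⟩ := h.isSylowIn.exists_conj_of_conj_chain (he ▸ h'.isSylowIn)
  have hconj := h.conj x
  rw [hx, he] at hconj
  refine ⟨Fin.castSucc_injective _ (eq_of_forall_gt_iff fun k => ?_), (card_conjSub x Q).symm⟩
  rw [← hconj.le_iff, ← h'.le_iff]

lemma lt_of_face_eq (h : IrredundantAt p f Q i) (h' : IrredundantAt p f' Q i')
    {j : Fin (n + 2)} (he : f ∘ i.succ.succAbove = f' ∘ j.succAbove) (hne : f ≠ f') : i < i' := by
  have hek (k) : f (i.succ.succAbove k) = f' (j.succAbove k) := congrFun he k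
  by_cases hj_succ : j = i'.succ
  · subst hj_succ
    exact absurd (h.eq_of_face_eq h' he) hne
  by_cases hj_castSucc : j = i'.castSucc
  · rw [← h.le_face_iff, hek, hj_castSucc, Fin.succAbove_castSucc_self]
    exact h'.le_iff.2 Fin.castSucc_lt_succ
  obtain ⟨k, hk⟩ := Fin.exists_succAbove_eq (Ne.symm hj_castSucc)
  obtain ⟨l, hl⟩ := Fin.exists_succAbove_eq (Ne.symm hj_succ)
  refine absurd ?_ (h.face_ne_sup (k := k) (l := l) ?_)
  · rw [hek, hek, hk, hl, h'.succ_eq]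
  · rw [hek, hk]
    exact h'.not_le

lemma card_lt_or_lt_of_conj_face_eq [Fact p.Prime] (hG : PseudoFiniteAt p G)
    (h : IrredundantAt p f Q i) (h' : IrredundantAt p f' Q' i') {j : Fin (n + 2)} {g : G}
    (he : conjSub g ∘ f' ∘ j.succAbove = f ∘ i.succ.succAbove)
    (hne : ∀ x, conjSub x ∘ f' ≠ f) :
    Nat.card Q' < Nat.card Q ∨ Nat.card Q' = Nat.card Q ∧ i < i' := by
  have hQ := h.isSylowIn_face hG
  have h'g := h'.conj g
  have hQ'g : conjSub g Q' ≤ chainNorm (f ∘ i.succ.succAbove) :=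
    h'g.isSylowIn.1.trans ((chainNorm_le_comp _ j.succAbove).trans_eq (congrArg _ he))
  have hcard := hQ.card_le hQ'g h'g.isSylowIn.isFinitePSubgroup
  rw [card_conjSub] at hcard
  refine hcard.lt_or_eq.imp_right fun hcard => ⟨hcard, ?_⟩
  obtain ⟨x, hx, hxQ⟩ := hQ.exists_conjSub_eq hQ'g h'g.isSylowIn.isFinitePSubgroup
    (by rw [card_conjSub, hcard])
  rw [mem_chainNorm_iff] at hx
  refine h.lt_of_face_eq (j := j) (hxQ ▸ h'g.conj x) ?_ fun hf => hne (g * x) ?_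
  · rw [← hx, ← he]
    rfl
  · rw [hf]
    exact funext fun k => (conjSub_conjSub g x (f' k)).symm

lemma not_isSylowIn_top_face_zero [Fact p.Prime] (hG : PseudoFiniteAt p G)
    (h : IrredundantAt p f Q i) : ¬ IsSylowIn p ⊤ (f (i.succ.succAbove 0)) := by
  intro hS
  have hle := h.isPChain_face.head_le_of_isSylowIn (h.isSylowIn_face hG)
  have heq := hS.eq_of_le le_top h.isSylowIn.isFinitePSubgroup hle
  exact not_lt_of_ge i.zero_le (h.le_face_iff.1 heq.ge)

end IrredundantAt

namespace IsPChain

variable {Q : Subgroup G}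

lemma irredundantAt_of_eq_sup {f : Fin (n + 2) → Subgroup G} (hf : IsPChain p f)
    (hQ : IsSylowIn p (chainNorm f) Q) {k l : Fin (n + 2)} (hk : Maximal (fun k => ¬ Q ≤ f k) k)
    (hl : f l = Q ⊔ f k) : ∃ i, IrredundantAt p f Q i := by
  have hkl : k < l := by
    refine hf.strictMono.lt_iff_lt.1 (hl ▸ lt_of_le_of_ne le_sup_right fun he => hk.prop ?_)
    exact sup_eq_right.1 he.symm
  obtain ⟨i, rfl⟩ := Fin.exists_castSucc_eq.2 (hkl.trans_le l.le_last).ne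
  refine ⟨i, hf, hQ, le_antisymm ?_ (sup_le ?_ ?_)⟩
  · exact hl ▸ hf.strictMono.monotone (Fin.castSucc_lt_iff_succ_le.1 hkl)
  · exact not_not.1 (hk.not_prop_of_gt Fin.castSucc_lt_succ)
  · exact (hf.strictMono Fin.castSucc_lt_succ).le

variable {f : Fin (n + 1) → Subgroup G}

lemma insertNth_sup (hf : IsPChain p f)
    (hQ : IsSylowIn p (chainNorm f) Q) {k : Fin (n + 1)} (hk : Maximal (fun k => ¬ Q ≤ f k) k)
    (hne : ∀ l, f l ≠ Q ⊔ f k) :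
    IsPChain p (k.succ.insertNth (α := fun _ => Subgroup G) (Q ⊔ f k) f) where
  strictMono := by
    refine (Fin.strictMono_insertNth_iff _ _ _).2 ⟨hf.strictMono, fun l hl => ?_, fun l hl => ?_⟩
    · calc f l ≤ f k := hf.strictMono.monotone (Fin.castSucc_lt_succ_iff.1 hl)
        _ < Q ⊔ f k := right_lt_sup.2 hk.prop
    · have hkl : k < l := Fin.succ_le_castSucc_iff.1 hl
      have hQl : Q ≤ f l := not_not.1 (hk.not_prop_of_gt hkl)
      exact lt_of_le_of_ne (sup_le hQl (hf.strictMono hkl).le) (hne l).symm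
  isFinitePSubgroup := by
    refine (Fin.forall_iff_succAbove k.succ).2 ⟨?_, fun l => ?_⟩
    · simpa using hQ.isFinitePSubgroup.sup (hf.isFinitePSubgroup k)
        (hQ.1.trans (chainNorm_le f k))
    · simpa using hf.isFinitePSubgroup l

lemma irredundantAt_insertNth_sup [Fact p.Prime] (hG : PseudoFiniteAt p G) (hf : IsPChain p f)
    (hQ : IsSylowIn p (chainNorm f) Q) {k : Fin (n + 1)} (hk : Maximal (fun k => ¬ Q ≤ f k) k)
    (hne : ∀ l, f l ≠ Q ⊔ f k) :
    IrredundantAt p (k.succ.insertNth (α := fun _ => Subgroup G) (Q ⊔ f k) f) Q k := by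
  have hins := hf.insertNth_sup hQ hk hne
  refine ⟨hins, ?_, ?_⟩
  · obtain ⟨S, hS⟩ := hins.exists_isSylowIn hG
    refine hQ.of_inf_normalizer_le hS (le_iInf ?_) (inf_le_left.trans ?_)
    · refine (Fin.forall_iff_succAbove k.succ).2 ⟨?_, fun l => ?_⟩
      · simpa using le_sup_left.trans Subgroup.le_normalizer
      · simpa using hQ.1.trans (chainNorm_le f l)
    · refine (chainNorm_le_comp _ k.succ.succAbove).trans_eq ?_
      simp
  · rw [Fin.insertNth_apply_same, ← Fin.succAbove_succ_self, Fin.insertNth_apply_succAbove]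

lemma exists_maximal_not_le (hf : IsPChain p f) (hQ : IsSylowIn p (chainNorm f) Q)
    (hhead : ¬ IsSylowIn p (chainNorm f) (f 0)) : ∃ k, Maximal (fun k => ¬ Q ≤ f k) k :=
  (Set.toFinite {k | ¬ Q ≤ f k}).exists_maximal
    ⟨0, fun hle => hhead (le_antisymm hle (hf.head_le_of_isSylowIn hQ) ▸ hQ)⟩

lemma exists_irredundantAt_or_exists_face_eq [Fact p.Prime] (hG : PseudoFiniteAt p G)
    {f : Fin (n + 2) → Subgroup G} (hf : IsPChain p f) :
    (∃ Q i, IrredundantAt p f Q i) ∨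
      ∃ h Q k, IrredundantAt p h Q k ∧ h ∘ k.succ.succAbove = f := by
  obtain ⟨Q, hQ⟩ := hf.exists_isSylowIn hG
  obtain ⟨k, hk⟩ := hf.exists_maximal_not_le hQ
    fun hhead => n.succ_ne_zero (hf.eq_zero_of_isSylowIn_head hhead)
  by_cases hl : ∃ l, f l = Q ⊔ f k
  · obtain ⟨l, hl⟩ := hl
    exact Or.inl ⟨Q, hf.irredundantAt_of_eq_sup hQ hk hl⟩
  · exact Or.inr ⟨_, Q, k, hf.irredundantAt_insertNth_sup hG hQ hk (not_exists.1 hl),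
      Fin.insertNth_comp_succAbove _ _ _⟩

lemma isSylowIn_top_or_exists_face_eq [Fact p.Prime] (hG : PseudoFiniteAt p G)
    {f : Fin 1 → Subgroup G} (hf : IsPChain p f) :
    IsSylowIn p ⊤ (f 0) ∨
      ∃ h Q k, IrredundantAt p h Q k ∧ h ∘ k.succ.succAbove = f := by
  obtain ⟨Q, hQ⟩ := hf.exists_isSylowIn hG
  by_cases hhead : IsSylowIn p (chainNorm f) (f 0)
  · exact Or.inl (hhead.isSylowIn_top_of_vertex hG)
  obtain ⟨k, hk⟩ := hf.exists_maximal_not_le hQ hhead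
  have hne : ∀ l, f l ≠ Q ⊔ f k := fun l hl => hk.prop (by
    rw [Subsingleton.elim l k] at hl
    exact hl ▸ le_sup_left)
  exact Or.inr ⟨_, Q, k, hf.irredundantAt_insertNth_sup hG hQ hk hne,
    Fin.insertNth_comp_succAbove _ _ _⟩

end IsPChain

end Irredundant

/-! ### The orbit complex of a collection of `p`-subgroups -/

section OrbitComplex

variable {G : Type} [Group G] {C : Set (Subgroup G)} {p n : ℕ}

/-- The chain of subgroups underlying a simplex of the nerve of `C`. -/
def nerveChain (F : ComposableArrows C n) : Fin (n + 1) → Subgroup G :=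
  fun k => (F.obj k).1

lemma nerveChain_injective :
    Function.Injective (nerveChain : ComposableArrows C n → Fin (n + 1) → Subgroup G) :=
  fun _ _ h => CategoryTheory.Functor.ext (fun k => Subtype.ext (congrFun h k))
    fun _ _ _ => Subsingleton.elim _ _

lemma exists_nerveChain_eq {f : Fin (n + 1) → Subgroup G} (hf : Monotone f)
    (hfC : ∀ k, f k ∈ C) : ∃ F : ComposableArrows C n, nerveChain F = f :=
  ⟨Monotone.functor (f := fun k => (⟨f k, hfC k⟩ : C)) hf, rfl⟩

lemma isPChain_nerveChain (hC : ∀ P ∈ C, IsFinitePSubgroup p P) {F : ComposableArrows C n}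
    (hF : StrictMono (nerveChain F)) : IsPChain p (nerveChain F) :=
  ⟨hF, fun k => hC _ (F.obj k).2⟩

variable (hconj : ∀ P ∈ C, ∀ g : G, conjSub g P ∈ C)

/-- The order complex of `C` modulo conjugation: its `n`-simplices are the conjugacy classes of
chains of length `n` in `C`. -/
abbrev orbitComplex : SSet.{0} :=
  orbitSSet fun g => nerveFunctor.map (conjFun_monotone C hconj g).functor.toCatHom

/-- The conjugacy class of a chain, as a simplex of the orbit complex. -/
def orbitSimplex (F : ComposableArrows C n) : (orbitComplex hconj) _⦋n⦌ :=
  Quot.mk _ F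

variable {hconj}

lemma orbitSimplex_eq_iff {F F' : ComposableArrows C n} :
    orbitSimplex hconj F = orbitSimplex hconj F' ↔
      ∃ g, conjSub g ∘ nerveChain F = nerveChain F' := by
  have hequiv : Equivalence fun F F' : ComposableArrows C n =>
      ∃ g, conjSub g ∘ nerveChain F = nerveChain F' :=
    ⟨fun _ => ⟨1, funext fun _ => conjSub_one _⟩,
      fun ⟨g, hg⟩ => ⟨g⁻¹, hg ▸ funext fun _ => conjSub_inv_conjSub _ _⟩,
      fun ⟨g, hg⟩ ⟨h, hh⟩ => ⟨g * h, hh ▸ hg ▸ funext fun _ => (conjSub_conjSub _ _ _).symm⟩⟩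
  have hrel : (fun F F' : ComposableArrows C n => ∃ g,
      (nerveFunctor.map (conjFun_monotone C hconj g).functor.toCatHom).app (.op ⦋n⦌) F = F') =
      fun F F' => ∃ g, conjSub g ∘ nerveChain F = nerveChain F' := by
    funext F F'
    exact propext (exists_congr fun g => nerveChain_injective.eq_iff.symm)
  rw [← hequiv.quot_mk_eq_iff, ← hrel]
  rfl

lemma orbitSimplex_mem_nonDegenerate_iff {F : ComposableArrows C n} :
    orbitSimplex hconj F ∈ (orbitComplex hconj).nonDegenerate n ↔ StrictMono (nerveChain F) := by
  refine ⟨fun h => ?_, fun h => ?_⟩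
  · exact (PartialOrder.mem_nerve_nonDegenerate_iff_strictMono F).1
      fun hF => h (SSet.degenerate_app_apply hF (toOrbitSSet _))
  · rintro ⟨m, hm, φ, ⟨⟨F'⟩, hF'⟩⟩
    obtain ⟨g, hg⟩ : ∃ g, conjSub g ∘ nerveChain F' ∘ φ.toOrderHom = nerveChain F :=
      orbitSimplex_eq_iff.1 hF'
    have hφ : Function.Injective φ.toOrderHom :=
      (hg ▸ h.injective : Function.Injective (conjSub g ∘ nerveChain F' ∘ _)).of_comp.of_comp
    have := SimplexCategory.mono_iff_injective.2 hφ
    exact hm.not_ge (SimplexCategory.len_le_of_mono φ)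

lemma isSylowIn_top_of_orbitSimplex_mem_ofSimplex {F₀ : ComposableArrows C 0}
    (hS : IsSylowIn p ⊤ (nerveChain F₀ 0)) {F : ComposableArrows C n}
    (h : orbitSimplex hconj F ∈
      (SSet.Subcomplex.ofSimplex (orbitSimplex hconj F₀)).obj (.op ⦋n⦌)) (k : Fin (n + 1)) :
    IsSylowIn p ⊤ (nerveChain F k) := by
  obtain ⟨φ, hφ⟩ := (SSet.Subcomplex.mem_ofSimplex_obj_iff _ _).1 h
  obtain ⟨g, hg⟩ : ∃ g, conjSub g ∘ nerveChain F₀ ∘ φ.toOrderHom = nerveChain F :=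
    orbitSimplex_eq_iff.1 hφ
  rw [← hg, Function.comp_apply, Function.comp_apply, Fin.fin_one_eq_zero (φ.toOrderHom k)]
  exact hS.conj_of_mem (Subgroup.mem_top g)

lemma orbitSimplex_eq_of_isSylowIn_top {F F' : ComposableArrows C 0}
    (h : IsSylowIn p ⊤ (nerveChain F 0)) (h' : IsSylowIn p ⊤ (nerveChain F' 0)) :
    orbitSimplex hconj F = orbitSimplex hconj F' := by
  obtain ⟨g, -, hg⟩ := h'.exists_conjSub_eq_of_isSylowIn h
  refine orbitSimplex_eq_iff.2 ⟨g, funext fun k => ?_⟩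
  rwa [Fin.fin_one_eq_zero k]

variable (p hconj) in
/-- A simplex of the orbit complex represented by a chain `f` with `IrredundantAt p f Q index`.
The index and the order of `Q` depend only on the simplex; recording them avoids choosing
representatives. -/
structure IrredundantSimplex where
  dim : ℕ
  simplex : (orbitComplex hconj) _⦋dim + 1⦌
  index : Fin (dim + 1)
  sylowCard : ℕ
  exists_rep : ∃ F Q, orbitSimplex hconj F = simplex ∧
    IrredundantAt p (nerveChain F) Q index ∧ Nat.card Q = sylowCard

namespace IrredundantSimplex

lemma mk_eq_mk {F F' : ComposableArrows C (n + 1)} {Q Q' : Subgroup G} {i i' : Fin (n + 1)}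
    (h : IrredundantAt p (nerveChain F) Q i) (h' : IrredundantAt p (nerveChain F') Q' i') {g : G}
    (hg : conjSub g ∘ nerveChain F = nerveChain F') :
    (⟨n, orbitSimplex hconj F, i, _, F, Q, rfl, h, rfl⟩ : IrredundantSimplex p hconj) =
      ⟨n, orbitSimplex hconj F', i', _, F', Q', rfl, h', rfl⟩ := by
  obtain ⟨rfl, hcard⟩ := h.index_eq_and_card_eq_of_conj_eq h' hg
  have hF : orbitSimplex hconj F = orbitSimplex hconj F' := orbitSimplex_eq_iff.2 ⟨g, hg⟩
  simp only [hF, hcard]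

lemma eq_of_simplex_eq {s t : IrredundantSimplex p hconj}
    (h : SSet.S.mk s.simplex = SSet.S.mk t.simplex) : s = t := by
  obtain ⟨n, _, i, _, F, Q, rfl, hF, rfl⟩ := s
  obtain ⟨m, _, i', _, F', Q', rfl, hF', rfl⟩ := t
  obtain rfl : n = m := Nat.succ_injective (SSet.S.dim_eq_of_mk_eq h)
  obtain ⟨g, hg⟩ := orbitSimplex_eq_iff.1 ((SSet.S.ext_iff _ _).1 h)
  exact mk_eq_mk hF hF' hg

lemma simplex_mem_nonDegenerate (s : IrredundantSimplex p hconj) :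
    s.simplex ∈ (orbitComplex hconj).nonDegenerate (s.dim + 1) := by
  obtain ⟨n, _, i, _, F, Q, rfl, hF, rfl⟩ := s
  exact orbitSimplex_mem_nonDegenerate_iff.2 hF.strictMono

/-- The codimension one face with which an irredundant simplex is paired. -/
def face (s : IrredundantSimplex p hconj) : (orbitComplex hconj) _⦋s.dim⦌ :=
  (orbitComplex hconj).δ s.index.succ s.simplex

lemma face_mem_nonDegenerate (s : IrredundantSimplex p hconj) :
    s.face ∈ (orbitComplex hconj).nonDegenerate s.dim := by
  obtain ⟨n, _, i, _, F, Q, rfl, hF, rfl⟩ := s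
  exact orbitSimplex_mem_nonDegenerate_iff.2 hF.isPChain_face.strictMono

lemma eq_of_face_eq [Fact p.Prime] (hG : PseudoFiniteAt p G) {s t : IrredundantSimplex p hconj}
    (h : SSet.S.mk s.face = SSet.S.mk t.face) : s = t := by
  obtain ⟨n, _, i, _, F, Q, rfl, hF, rfl⟩ := s
  obtain ⟨m, _, i', _, F', Q', rfl, hF', rfl⟩ := t
  obtain rfl : n = m := SSet.S.dim_eq_of_mk_eq h
  obtain ⟨g, hg⟩ := orbitSimplex_eq_iff.1 ((SSet.S.ext_iff _ _).1 h)
  obtain ⟨x, hx⟩ := hF.exists_conj_eq_of_conj_face_eq hG hF' hg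
  exact mk_eq_mk hF hF' hx

lemma simplex_ne_face [Fact p.Prime] (hG : PseudoFiniteAt p G) (s t : IrredundantSimplex p hconj) :
    SSet.S.mk s.simplex ≠ SSet.S.mk t.face := by
  intro h
  obtain ⟨n, _, i, _, F, Q, rfl, hF, rfl⟩ := s
  obtain ⟨m, _, i', _, F', Q', rfl, hF', rfl⟩ := t
  obtain rfl : n + 1 = m := SSet.S.dim_eq_of_mk_eq h
  obtain ⟨g, hg⟩ := orbitSimplex_eq_iff.1 ((SSet.S.ext_iff _ _).1 h)
  exact hF.conj_ne_face hG hF' g hg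

lemma face_notMem_ofSimplex [Fact p.Prime] (hG : PseudoFiniteAt p G) {F₀ : ComposableArrows C 0}
    (hS : IsSylowIn p ⊤ (nerveChain F₀ 0)) (s : IrredundantSimplex p hconj) :
    s.face ∉ (SSet.Subcomplex.ofSimplex (orbitSimplex hconj F₀)).obj (.op ⦋s.dim⦌) := by
  obtain ⟨n, _, i, _, F, Q, rfl, hF, rfl⟩ := s
  exact fun h => hF.not_isSylowIn_top_face_zero hG
    (isSylowIn_top_of_orbitSimplex_mem_ofSimplex hS (F := (nerve C).δ i.succ F) h 0)

lemma simplex_notMem_ofSimplex [Fact p.Prime] (hG : PseudoFiniteAt p G)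
    {F₀ : ComposableArrows C 0} (hS : IsSylowIn p ⊤ (nerveChain F₀ 0))
    (s : IrredundantSimplex p hconj) :
    s.simplex ∉ (SSet.Subcomplex.ofSimplex (orbitSimplex hconj F₀)).obj (.op ⦋s.dim + 1⦌) :=
  fun h => s.face_notMem_ofSimplex hG hS ((SSet.Subcomplex.ofSimplex _).map _ h)

lemma exists_face_eq (hover : ∀ P ∈ C, ∀ Q, P ≤ Q → IsFinitePSubgroup p Q → Q ∈ C)
    {F : ComposableArrows C n} {f : Fin (n + 2) → Subgroup G} {Q : Subgroup G} {k : Fin (n + 1)}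
    (hf : IrredundantAt p f Q k) (hface : f ∘ k.succ.succAbove = nerveChain F) :
    ∃ s : IrredundantSimplex p hconj, SSet.S.mk (orbitSimplex hconj F) = SSet.S.mk s.face := by
  have hzero : f 0 ∈ C := by
    have := congrFun hface 0
    rw [Function.comp_apply, Fin.succ_succAbove_zero] at this
    exact this ▸ (F.obj 0).2
  obtain ⟨F', rfl⟩ := exists_nerveChain_eq hf.strictMono.monotone fun l =>
    hover _ hzero _ (hf.strictMono.monotone l.zero_le) (hf.isFinitePSubgroup l)
  obtain rfl : (nerve C).δ k.succ F' = F := nerveChain_injective hface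
  exact ⟨⟨n, _, k, _, F', Q, rfl, hf, rfl⟩, rfl⟩

lemma exists_simplex_eq_or_face_eq [Fact p.Prime] (hG : PseudoFiniteAt p G)
    (hC : ∀ P ∈ C, IsFinitePSubgroup p P)
    (hover : ∀ P ∈ C, ∀ Q, P ≤ Q → IsFinitePSubgroup p Q → Q ∈ C)
    {F₀ : ComposableArrows C 0} (hS : IsSylowIn p ⊤ (nerveChain F₀ 0))
    {F : ComposableArrows C n} (hF : StrictMono (nerveChain F))
    (hmem : orbitSimplex hconj F ∉
      (SSet.Subcomplex.ofSimplex (orbitSimplex hconj F₀)).obj (.op ⦋n⦌)) :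
    ∃ s : IrredundantSimplex p hconj, SSet.S.mk (orbitSimplex hconj F) = SSet.S.mk s.simplex ∨
      SSet.S.mk (orbitSimplex hconj F) = SSet.S.mk s.face := by
  have hchain := isPChain_nerveChain hC hF
  cases n with
  | zero =>
    rcases hchain.isSylowIn_top_or_exists_face_eq hG with hSylow | ⟨f, Q, k, hf, hface⟩
    · refine absurd ?_ hmem
      rw [orbitSimplex_eq_of_isSylowIn_top hSylow hS]
      exact SSet.Subcomplex.mem_ofSimplex_obj _
    · exact (exists_face_eq hover hf hface).imp fun _ => Or.inr
  | succ n =>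
    rcases hchain.exists_irredundantAt_or_exists_face_eq hG with
      ⟨Q, i, hirr⟩ | ⟨f, Q, k, hf, hface⟩
    · exact ⟨⟨n, _, i, _, F, Q, rfl, hirr, rfl⟩, Or.inl rfl⟩
    · exact (exists_face_eq hover hf hface).imp fun _ => Or.inr

lemma isUniquelyCodimOneFace_face (s : IrredundantSimplex p hconj) :
    SSet.S.IsUniquelyCodimOneFace (SSet.S.mk s.face) (SSet.S.mk s.simplex) := by
  rw [SSet.S.IsUniquelyCodimOneFace.iff]
  refine ⟨_, rfl, fun j hj => ?_⟩
  obtain ⟨n, _, i, _, F, Q, rfl, hF, rfl⟩ := s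
  obtain ⟨g, hg⟩ := orbitSimplex_eq_iff.1 hj
  exact hF.eq_of_conj_face_eq hg

lemma sylowCard_le {S : Subgroup G} (hS : IsSylowIn p ⊤ S) (s : IrredundantSimplex p hconj) :
    s.sylowCard ≤ Nat.card S := by
  obtain ⟨n, _, i, _, F, Q, rfl, hF, rfl⟩ := s
  exact hS.card_le le_top hF.isSylowIn.isFinitePSubgroup

lemma sylowCard_lt_or_index_lt [Fact p.Prime] (hG : PseudoFiniteAt p G)
    {s t : IrredundantSimplex p hconj} (hne : s ≠ t) (hdim : s.dim = t.dim)
    {φ : ⦋s.dim⦌ ⟶ ⦋t.dim + 1⦌} (hmono : Mono φ)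
    (hφ : (orbitComplex hconj).map φ.op t.simplex = s.face) :
    t.sylowCard < s.sylowCard ∨ t.sylowCard = s.sylowCard ∧ (s.index : ℕ) < t.index := by
  obtain ⟨n, _, i, _, F, Q, rfl, hF, rfl⟩ := s
  obtain ⟨m, _, i', _, F', Q', rfl, hF', rfl⟩ := t
  obtain rfl : n = m := hdim
  obtain ⟨j, rfl⟩ := SimplexCategory.eq_δ_of_mono φ
  obtain ⟨g, hg⟩ := orbitSimplex_eq_iff.1 hφ
  exact hF.card_lt_or_lt_of_conj_face_eq hG hF' hg fun x hx => hne (mk_eq_mk hF' hF hx).symm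

end IrredundantSimplex

variable [Fact p.Prime] (hG : PseudoFiniteAt p G) (hC : ∀ P ∈ C, IsFinitePSubgroup p P)
  (hover : ∀ P ∈ C, ∀ Q, P ≤ Q → IsFinitePSubgroup p Q → Q ∈ C)
  {F₀ : ComposableArrows C 0} (hS : IsSylowIn p ⊤ (nerveChain F₀ 0))

variable (hconj) in
/-- The pairing on the complement of the Sylow vertex of the orbit complex that matches an
irredundant simplex with its distinguished face. -/
def irredundantPairingCore :
    (SSet.Subcomplex.ofSimplex (orbitSimplex hconj F₀)).PairingCore where
  ι := IrredundantSimplex p hconj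
  dim s := s.dim
  simplex s := s.simplex
  index s := s.index.succ
  nonDegenerate₁ s := s.simplex_mem_nonDegenerate
  nonDegenerate₂ s := s.face_mem_nonDegenerate
  notMem₁ s := s.simplex_notMem_ofSimplex hG hS
  notMem₂ s := s.face_notMem_ofSimplex hG hS
  injective_type₁' h := IrredundantSimplex.eq_of_simplex_eq h
  injective_type₂' h := IrredundantSimplex.eq_of_face_eq hG h
  type₁_ne_type₂' s t := s.simplex_ne_face hG t
  surjective' x := by
    obtain ⟨n, ⟨F⟩, hF, hmem, rfl⟩ := x.mk_surjective
    exact IrredundantSimplex.exists_simplex_eq_or_face_eq hG hC hover hS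
      (orbitSimplex_mem_nonDegenerate_iff.1 hF) hmem

instance irredundantPairingCore_isProper :
    (irredundantPairingCore hconj hG hC hover hS).IsProper :=
  ⟨IrredundantSimplex.isUniquelyCodimOneFace_face⟩

/-- Pairs are ordered by decreasing order of the Sylow subgroup, then by increasing index. -/
noncomputable def irredundantPairingCoreRank :
    (irredundantPairingCore hconj hG hC hover hS).WeakRankFunction (ℕ ×ₗ ℕ) where
  rank (s : IrredundantSimplex p hconj) :=
    toLex (Nat.card (nerveChain F₀ 0) - s.sylowCard, (s.index : ℕ))
  lt := by
    rintro (s : IrredundantSimplex p hconj) (t : IrredundantSimplex p hconj) ⟨hne, hlt⟩ hdim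
    obtain ⟨φ, hmono, hφ⟩ := SSet.N.le_iff_exists_mono.1 (SSet.Subcomplex.N.le_iff.1 hlt.le)
    rw [Prod.Lex.toLex_lt_toLex]
    have hs := s.sylowCard_le hS
    have ht := t.sylowCard_le hS
    rcases IrredundantSimplex.sylowCard_lt_or_index_lt hG hne hdim hmono hφ with
      hcard | ⟨hcard, hindex⟩
    · exact Or.inl (by dsimp only; omega)
    · exact Or.inr ⟨by dsimp only; rw [hcard], hindex⟩

instance irredundantPairingCore_isRegular :
    (irredundantPairingCore hconj hG hC hover hS).IsRegular :=
  (irredundantPairingCoreRank hG hC hover hS).isRegular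

end OrbitComplex

/-- Let `p` be a prime, `G` a group pseudo finite at `p`, and `C` a nonempty
collection of nontrivial finite `p`-subgroups of `G` closed under
`G`-conjugation and under passage to overgroups that are finite `p`-groups.
Then the quotient of the geometric realization of the order complex (nerve) of
the poset `C` by the conjugation action of `G` is contractible.  Here the
quotient is the quotient space of the realization by the relation identifying
each point with its image under the self-map induced (functorially, via the
nerve and geometric realization) by conjugation by each `g ∈ G`. -/
theorem orbit_space_contractible_of_pseudoFinite (p : ℕ) (hp : p.Prime)
    {G : Type} [Group G] (hG : PseudoFiniteAt p G)
    (C : Set (Subgroup G)) (hne : C.Nonempty)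
    (hnt : ∀ P ∈ C, P ≠ ⊥)
    (hfin : ∀ P ∈ C, Finite P)
    (hpg : ∀ P ∈ C, IsPGroup p P)
    (hconj : ∀ P ∈ C, ∀ g : G, conjSub g P ∈ C)
    (hover : ∀ P ∈ C, ∀ Q : Subgroup G, P ≤ Q → Finite Q → IsPGroup p Q → Q ∈ C) :
    ContractibleSpace
      (Quot (fun x y : (SSet.toTop.obj (nerveFunctor.obj (Cat.of ↥C))) =>
        ∃ g : G,
          (SSet.toTop.map (nerveFunctor.map (conjFun_monotone C hconj g).functor.toCatHom)) x = y)) := by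
  have := Fact.mk hp
  have hC : ∀ P ∈ C, IsFinitePSubgroup p P := fun P hP => ⟨hfin P hP, hpg P hP⟩
  have hover' : ∀ P ∈ C, ∀ Q, P ≤ Q → IsFinitePSubgroup p Q → Q ∈ C :=
    fun P hP Q hPQ hQ => hover P hP Q hPQ hQ.finite hQ.isPGroup
  obtain ⟨S, hS⟩ := hG.exists_isSylowIn_top
  have hSC : S ∈ C := hS.mem_of_nonempty hne hC hconj hover'
  obtain ⟨F₀, hF₀⟩ : ∃ F₀ : ComposableArrows C 0, nerveChain F₀ = fun _ => S :=
    exists_nerveChain_eq monotone_const fun _ => hSC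
  have hSylow : IsSylowIn p ⊤ (nerveChain F₀ 0) := hF₀ ▸ hS
  have hanodyne : SSet.anodyneExtensions
      (SSet.Subcomplex.ofSimplex (orbitSimplex hconj F₀)).ι :=
    (irredundantPairingCore hconj hG hC hover' hSylow).pairing.anodyneExtensions
  have := contractibleSpace_toTop_of_anodyneExtensions _ hanodyne
  exact (TopCat.homeoOfIso (orbitSpaceIso _)).contractibleSpace
end

section
/- Let p be a prime, G a group, and γ = (P_0 < P_1 < ... < P_n) a strictly increasing chain of nontrivial finite p-subgroups of G that is redundant. Let Q be a Sylow p-subgroup of N_G(γ). Then: (a) Q is not contained in P_0 (so there is a maximal index i with 0 ≤ i ≤ n such that Q is not contained in P_i); (b) for this maximal index i, the product QP_i is a subgroup satisfying P_i < QP_i properly, and if i < n then also QP_i < P_{i+1} properly. In particular, inserting QP_i into the chain immediately after P_i yields a strictly increasing chain of nontrivial finite p-subgroups. -/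
open scoped Pointwise

/-!
A normal finite `p`-subgroup of `N_G(γ)` lies in every Sylow `p`-subgroup `Q`, so `P_0 ≤ Q`; if also
`Q ≤ P_0`, then `P_0 = Q = Q·P_{-1}`, against redundancy. If `Q ≤ P_{i+1}` then `Q·P_i ≤ P_{i+1}`,
and redundancy makes this inclusion proper, so `Q·P_i` fits strictly between `P_i` and `P_{i+1}` as
soon as `Q` is not contained in `P_i`.
-/

section

variable {p : ℕ} {G : Type*} [Group G]

theorem conjSub_eq_self_of_mem_normalizer {g : G} {P : Subgroup G}
    (hg : g ∈ Subgroup.normalizer (P : Set G)) : conjSub g P = P :=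
  Subgroup.mem_normalizer_iff_map_conj_eq.mp (inv_mem hg)

theorem finite_sup_of_le_normalizer {H K : Subgroup G} [Finite H] [Finite K]
    (hHK : H ≤ Subgroup.normalizer (K : Set G)) : Finite (H ⊔ K : Subgroup G) := by
  have hfinite : ((H : Set G) * (K : Set G)).Finite := (Set.toFinite _).mul (Set.toFinite _)
  rw [← Subgroup.coe_mul_of_left_le_normalizer_right H K hHK] at hfinite
  exact hfinite.to_subtype

theorem IsSylowIn.le_of_le_normalizer {N S P : Subgroup G} (hS : IsSylowIn p N S) (hPN : P ≤ N)
    (hNP : N ≤ Subgroup.normalizer (P : Set G)) (hfin : Finite P) (hP : IsPGroup p P) :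
    P ≤ S := by
  obtain ⟨g, hg, hgP⟩ := hS.2.2.2 P hPN hfin hP
  rwa [conjSub_eq_self_of_mem_normalizer (hNP hg)] at hgP

variable {n : ℕ} {γ : Fin (n + 1) → Subgroup G}

theorem chainNorm_le_normalizer (γ : Fin (n + 1) → Subgroup G) (i : Fin (n + 1)) :
    chainNorm γ ≤ Subgroup.normalizer (γ i : Set G) :=
  iInf_le _ i

theorem apply_zero_le_chainNorm (hγ : Monotone γ) : γ 0 ≤ chainNorm γ :=
  le_iInf fun i => (hγ (Fin.zero_le i)).trans Subgroup.le_normalizer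

theorem IsSylowIn.le_normalizer_apply {Q : Subgroup G} (hQ : IsSylowIn p (chainNorm γ) Q)
    (i : Fin (n + 1)) : Q ≤ Subgroup.normalizer (γ i : Set G) :=
  hQ.1.trans (chainNorm_le_normalizer γ i)

theorem chainPrev_zero (γ : Fin (n + 1) → Subgroup G) : chainPrev γ 0 = ⊥ :=
  rfl

theorem chainPrev_succ (γ : Fin (n + 1) → Subgroup G) (i : Fin n) :
    chainPrev γ i.succ = γ i.castSucc :=
  rfl

theorem insertChain_eq_insertNth (γ : Fin (n + 1) → Subgroup G) (i : Fin (n + 1))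
    (H : Subgroup G) : insertChain γ i H = i.succ.insertNth H γ := by
  refine Fin.eq_insertNth_iff.mpr ⟨by simp [insertChain], funext fun j => ?_⟩
  rcases le_or_gt j i with hji | hij
  · have hval : (j : ℕ) ≤ i := hji
    simp [Fin.removeNth, Fin.succAbove_of_castSucc_lt _ _ (Fin.castSucc_lt_succ_iff.mpr hji),
      insertChain, hval]
  · have hval : (i : ℕ) < j := hij
    simp [Fin.removeNth, Fin.succAbove_of_le_castSucc _ _ (Fin.succ_le_castSucc_iff.mpr hij),
      insertChain, hval.ne', show ¬ (j : ℕ) + 1 ≤ i by omega]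

theorem forall_insertChain_iff (C : Subgroup G → Prop) {i : Fin (n + 1)} {H : Subgroup G} :
    (∀ j, C (insertChain γ i H j)) ↔ C H ∧ ∀ j, C (γ j) := by
  simp [insertChain_eq_insertNth, Fin.forall_iff_succAbove i.succ]

theorem strictMono_insertChain {i : Fin (n + 1)} {H : Subgroup G} (hγ : StrictMono γ)
    (hlt : γ i < H) (hgt : ∀ j, i < j → H < γ j) : StrictMono (insertChain γ i H) := by
  rw [insertChain_eq_insertNth, Fin.strictMono_insertNth_iff]
  exact ⟨hγ, fun j hji => (hγ.monotone (Fin.castSucc_lt_succ_iff.mp hji)).trans_lt hlt,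
    fun j hij => hgt j (Fin.succ_le_castSucc_iff.mp hij)⟩

namespace IsRedundant

variable {Q : Subgroup G}

theorem not_le_apply_zero (hred : IsRedundant p γ) (hQ : IsSylowIn p (chainNorm γ) Q)
    (hγ : Monotone γ) (hfin : Finite (γ 0)) (hpg : IsPGroup p (γ 0)) : ¬ Q ≤ γ 0 := by
  intro hQ_le
  have hle_Q : γ 0 ≤ Q := hQ.le_of_le_normalizer (apply_zero_le_chainNorm hγ)
    (chainNorm_le_normalizer γ 0) hfin hpg
  apply hred Q hQ 0
  simp [chainPrev_zero, le_antisymm hle_Q hQ_le]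

theorem sup_ne_apply_succ (hred : IsRedundant p γ) (hQ : IsSylowIn p (chainNorm γ) Q)
    (i : Fin n) : Q ⊔ γ i.castSucc ≠ γ i.succ := by
  intro heq
  apply hred Q hQ i.succ
  rw [chainPrev_succ, ← heq,
    Subgroup.coe_mul_of_left_le_normalizer_right _ _ (hQ.le_normalizer_apply _)]

theorem sup_lt_apply (hred : IsRedundant p γ) (hQ : IsSylowIn p (chainNorm γ) Q)
    (hγ : Monotone γ) {i : Fin (n + 1)} (hQ_le : ∀ j, i < j → Q ≤ γ j) {j : Fin (n + 1)}
    (hij : i < j) : Q ⊔ γ i < γ j := by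
  obtain ⟨k, rfl⟩ := Fin.exists_castSucc_eq.mpr (Fin.ne_last_of_lt hij)
  have hk : k.castSucc < k.succ := Fin.castSucc_lt_succ
  calc
    Q ⊔ γ k.castSucc < γ k.succ :=
      (sup_le (hQ_le _ hk) (hγ hk.le)).lt_of_ne (hred.sup_ne_apply_succ hQ k)
    _ ≤ γ j := hγ (Fin.castSucc_lt_iff_succ_le.mp hij)

end IsRedundant

end

theorem redundant_insert_general (p : ℕ) {G : Type*} [Group G] {n : ℕ}
    (γ : Fin (n + 1) → Subgroup G) (hmono : StrictMono γ)
    (hnt : ∀ i, γ i ≠ ⊥) (hfin : ∀ i, Finite (γ i)) (hpg : ∀ i, IsPGroup p (γ i))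
    (hred : IsRedundant p γ)
    (Q : Subgroup G) (hQ : IsSylowIn p (chainNorm γ) Q) :
    ¬ Q ≤ γ 0 ∧
    ∀ i : Fin (n + 1), ¬ Q ≤ γ i → (∀ j : Fin (n + 1), i < j → Q ≤ γ j) →
      ((Q : Set G) * (γ i : Set G) = ((Q ⊔ γ i : Subgroup G) : Set G)) ∧
      γ i < Q ⊔ γ i ∧
      (∀ hi : (i : ℕ) < n, Q ⊔ γ i < γ ⟨(i : ℕ) + 1, Nat.succ_lt_succ hi⟩) ∧
      StrictMono (insertChain γ i (Q ⊔ γ i)) ∧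
      (∀ j, insertChain γ i (Q ⊔ γ i) j ≠ ⊥) ∧
      (∀ j, Finite (insertChain γ i (Q ⊔ γ i) j)) ∧
      (∀ j, IsPGroup p (insertChain γ i (Q ⊔ γ i) j)) := by
  refine ⟨hred.not_le_apply_zero hQ hmono.monotone (hfin 0) (hpg 0), fun i hQi hQ_le => ?_⟩
  have hnorm := hQ.le_normalizer_apply i
  have hlt : γ i < Q ⊔ γ i := right_lt_sup.mpr hQi
  have hgt : ∀ j, i < j → Q ⊔ γ i < γ j := fun _ => hred.sup_lt_apply hQ hmono.monotone hQ_le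
  have hfin_sup : Finite (Q ⊔ γ i : Subgroup G) :=
    have := hQ.2.1
    finite_sup_of_le_normalizer hnorm
  have hpg_sup : IsPGroup p (Q ⊔ γ i : Subgroup G) :=
    hQ.2.2.1.to_sup_of_normal_right' (hpg i) hnorm
  exact ⟨(Subgroup.coe_mul_of_left_le_normalizer_right Q (γ i) hnorm).symm, hlt,
    fun _ => hgt _ (Nat.lt_succ_self i), strictMono_insertChain hmono hlt hgt,
    (forall_insertChain_iff (· ≠ ⊥)).mpr ⟨hlt.ne_bot, hnt⟩,
    (forall_insertChain_iff fun H => Finite H).mpr ⟨hfin_sup, hfin⟩,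
    (forall_insertChain_iff fun H => IsPGroup p H).mpr ⟨hpg_sup, hpg⟩⟩

/-- For a redundant chain `γ = (P_0 < ⋯ < P_n)` of nontrivial finite
`p`-subgroups and a Sylow `p`-subgroup `Q` of `N_G(γ)`:
(a) `Q` is not contained in `P_0`; (b) for the maximal index `i` with `Q` not
contained in `P_i`, the product `Q·P_i` is a subgroup (namely `Q ⊔ P_i`) with
`P_i < Q·P_i` properly, and if `i < n` then `Q·P_i < P_{i+1}` properly; in
particular inserting `Q·P_i` after position `i` yields a strictly increasing
chain of nontrivial finite `p`-subgroups. -/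
theorem redundant_insert (p : ℕ) (hp : p.Prime) {G : Type*} [Group G] {n : ℕ}
    (γ : Fin (n + 1) → Subgroup G) (hmono : StrictMono γ)
    (hnt : ∀ i, γ i ≠ ⊥) (hfin : ∀ i, Finite (γ i)) (hpg : ∀ i, IsPGroup p (γ i))
    (hred : IsRedundant p γ)
    (Q : Subgroup G) (hQ : IsSylowIn p (chainNorm γ) Q) :
    ¬ Q ≤ γ 0 ∧
    ∀ i : Fin (n + 1), ¬ Q ≤ γ i → (∀ j : Fin (n + 1), i < j → Q ≤ γ j) →
      ((Q : Set G) * (γ i : Set G) = ((Q ⊔ γ i : Subgroup G) : Set G)) ∧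
      γ i < Q ⊔ γ i ∧
      (∀ hi : (i : ℕ) < n, Q ⊔ γ i < γ ⟨(i : ℕ) + 1, by omega⟩) ∧
      StrictMono (insertChain γ i (Q ⊔ γ i)) ∧
      (∀ j, insertChain γ i (Q ⊔ γ i) j ≠ ⊥) ∧
      (∀ j, Finite (insertChain γ i (Q ⊔ γ i) j)) ∧
      (∀ j, IsPGroup p (insertChain γ i (Q ⊔ γ i) j)) := by
  exact redundant_insert_general p γ hmono hnt hfin hpg hred Q hQ
end
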